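/- arXiv:1801.07305 — 4 statements merged into one kernel-verified Lean document; each statement's English description precedes it below -/
import Mathlib

section
/- Let R ⊂ A be a Frobenius extension of rings and let M be a left A-module. If the Gorenstein projective dimension of M over A is finite, then G-pd_A M = G-pd_R M, where on the right M is viewed as a left R-module by restriction of scalars. -/
universe u

section Frobenius

variable {R A : Type u} [Ring R] [Ring A]

/-- A ring extension `ι : R →+* A` (an injective ring homomorphism) is a Frobenius extension
if there is an `R`-`R`-bimodule homomorphism `τ : A → R` together with dual bases
`x i`, `y i` in `A`. -/
def IsFrobeniusExtension (ι : R →+* A) : Prop :=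
  Function.Injective ι ∧
  ∃ (τ : A →+ R) (n : ℕ) (x y : Fin n → A),
    (∀ (r : R) (a : A), τ (ι r * a) = r * τ a) ∧
    (∀ (a : A) (r : R), τ (a * ι r) = τ a * r) ∧
    (∀ a : A, ∑ i, x i * ι (τ (y i * a)) = a) ∧
    (∀ a : A, ∑ i, ι (τ (a * x i)) * y i = a)

end Frobenius

/-- A left `R`-module `M` is Gorenstein projective if it is a syzygy of a totally acyclic
complex of projective modules: there is an acyclic complex `⋯ → P₁ → P₀ → P₋₁ → ⋯` of
projective `R`-modules which stays acyclic after applying `Hom_R(-, Q)` for every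
projective `R`-module `Q`, with `M ≅ ker (P₀ → P₋₁)`. -/
def IsGorensteinProjective (R : Type u) [Ring R] (M : ModuleCat.{u} R) : Prop :=
  ∃ (P : ℤ → ModuleCat.{u} R) (f : ∀ i : ℤ, P (i + 1) →ₗ[R] P i),
    (∀ i, Module.Projective R (P i)) ∧
    (∀ i, (f i).comp (f (i + 1)) = 0) ∧
    (∀ i, LinearMap.range (f (i + 1)) = LinearMap.ker (f i)) ∧
    (∀ Q : ModuleCat.{u} R, Module.Projective R Q →
      ∀ (i : ℤ) (g : P (i + 1) →ₗ[R] Q), g.comp (f (i + 1)) = 0 →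
        ∃ h : P i →ₗ[R] Q, h.comp (f i) = g) ∧
    Nonempty (↥M ≃ₗ[R] ↥(LinearMap.ker (f (-1))))

/-- `GPdimLE R n M` means that `M` admits a Gorenstein projective resolution of length `n`,
i.e. an exact sequence `0 → G_n → ⋯ → G₁ → G₀ → M → 0` with all `G_i` Gorenstein
projective. -/
def GPdimLE (R : Type u) [Ring R] : ℕ → ModuleCat.{u} R → Prop
  | 0, M => IsGorensteinProjective R M
  | n + 1, M => ∃ (G : ModuleCat.{u} R) (f : G →ₗ[R] M),
      Function.Surjective f ∧ IsGorensteinProjective R G ∧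
      GPdimLE R n (ModuleCat.of R ↥(LinearMap.ker f))

/-- The Gorenstein projective dimension of a left `R`-module, in `ℕ∞`. -/
noncomputable def GPdim (R : Type u) [Ring R] (M : ModuleCat.{u} R) : ℕ∞ :=
  sInf {k : ℕ∞ | ∃ n : ℕ, k = (n : ℕ∞) ∧ GPdimLE R n M}

section Aux

open CategoryTheory CategoryTheory.Abelian

namespace GPAux

/-- Short exact sequences, in elementary terms. -/
structure SES {R : Type u} [Ring R] {X Y Z : ModuleCat.{u} R} (j : X →ₗ[R] Y) (p : Y →ₗ[R] Z) :
    Prop where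
  inj : Function.Injective j
  exact : Function.Exact j p
  surj : Function.Surjective p

/-- Vanishing of `Ext^k(N, Q)` for all projective `Q`. -/
def VExt {R : Type u} [Ring R] (k : ℕ) (N : ModuleCat.{u} R) : Prop :=
  ∀ Q : ModuleCat.{u} R, Module.Projective R Q → ∀ e : Ext N Q k, e = 0

variable {R : Type u} [Ring R]

section
variable {X Y Z : ModuleCat.{u} R} {j : X →ₗ[R] Y} {p : Y →ₗ[R] Z}

/-- The associated short complex. -/
def SES.sc (h : SES j p) : ShortComplex (ModuleCat.{u} R) :=
  ShortComplex.mk (ModuleCat.ofHom j) (ModuleCat.ofHom p) (by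
    ext x; exact h.exact.apply_apply_eq_zero x)

lemma SES.se (h : SES j p) : h.sc.ShortExact :=
  ModuleCat.shortComplex_shortExact _ h.exact h.inj h.surj

lemma v_mid' {S : ShortComplex (ModuleCat.{u} R)} (h : S.ShortExact) {k : ℕ}
    (hX : VExt k S.X₁) (hZ : VExt k S.X₃) : VExt k S.X₂ := by
  intro Q hQ e
  obtain ⟨e', he'⟩ := Ext.contravariant_sequence_exact₂ h Q e (hX Q hQ _)
  rw [← he', hZ Q hQ e', Ext.comp_zero]

lemma v_right' {S : ShortComplex (ModuleCat.{u} R)} (h : S.ShortExact) {k : ℕ}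
    (hX : VExt k S.X₁) (hY : VExt (k + 1) S.X₂) : VExt (k + 1) S.X₃ := by
  intro Q hQ e
  obtain ⟨e', he'⟩ := Ext.contravariant_sequence_exact₃ h Q e (hY Q hQ _) (add_comm 1 k)
  rw [← he', hX Q hQ e', Ext.comp_zero]

lemma v_left' {S : ShortComplex (ModuleCat.{u} R)} (h : S.ShortExact) {k : ℕ}
    (hY : VExt k S.X₂) (hZ : VExt (k + 1) S.X₃) : VExt k S.X₁ := by
  intro Q hQ e
  obtain ⟨e', he'⟩ := Ext.contravariant_sequence_exact₁ h Q e (add_comm 1 k) (hZ Q hQ _)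
  rw [← he', hY Q hQ e', Ext.comp_zero]

lemma v_one' {S : ShortComplex (ModuleCat.{u} R)} (h : S.ShortExact) (hP : VExt 1 S.X₂)
    (H : ∀ (Q : ModuleCat.{u} R), Module.Projective R Q →
      ∀ φ : S.X₁ ⟶ Q, ∃ ψ : S.X₂ ⟶ Q, S.f ≫ ψ = φ) : VExt 1 S.X₃ := by
  intro Q hQ e
  obtain ⟨e', he'⟩ := Ext.contravariant_sequence_exact₃ h Q e (hP Q hQ _) (add_comm 1 0)
  obtain ⟨φ, rfl⟩ := (Ext.mk₀_bijective _ _).2 e'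
  obtain ⟨ψ, rfl⟩ := H Q hQ φ
  rw [← he', ← Ext.mk₀_comp_mk₀]
  exact h.extClass_comp_assoc _

lemma SES.v_mid (h : SES j p) {k : ℕ} (hX : VExt k X) (hZ : VExt k Z) : VExt k Y :=
  v_mid' h.se hX hZ

lemma SES.v_right (h : SES j p) {k : ℕ} (hX : VExt k X) (hY : VExt (k + 1) Y) :
    VExt (k + 1) Z :=
  v_right' h.se hX hY

lemma SES.v_left (h : SES j p) {k : ℕ} (hY : VExt k Y) (hZ : VExt (k + 1) Z) :
    VExt k X :=
  v_left' h.se hY hZ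

lemma v_proj (P : ModuleCat.{u} R) (hP : Module.Projective R P) (k : ℕ) : VExt (k + 1) P := by
  intro Q hQ e
  exact Ext.eq_zero_of_projective e

lemma SES.extend (h : SES j p) (hZ : VExt 1 Z) (Q : ModuleCat.{u} R) (hQ : Module.Projective R Q)
    (φ : X →ₗ[R] Q) : ∃ ψ : Y →ₗ[R] Q, ψ.comp j = φ := by
  obtain ⟨e', he'⟩ := Ext.contravariant_sequence_exact₁ h.se Q (Ext.mk₀ (ModuleCat.ofHom φ))
    (add_comm 1 0) (hZ Q hQ _)
  obtain ⟨g, rfl⟩ := (Ext.mk₀_bijective _ _).2 e'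
  rw [Ext.mk₀_comp_mk₀] at he'
  have := (Ext.mk₀_bijective _ _).1 he'
  exact ⟨g.hom, congrArg ModuleCat.Hom.hom this⟩

lemma SES.v_one (h : SES j p) (hP : Module.Projective R Y)
    (H : ∀ (Q : ModuleCat.{u} R), Module.Projective R Q → ∀
    (φ : X →ₗ[R] Q), ∃ ψ : Y →ₗ[R] Q, ψ.comp j = φ) : VExt 1 Z := by
  refine v_one' h.se (v_proj Y hP 0) ?_
  intro Q hQ φ
  obtain ⟨ψ, hψ⟩ := H Q hQ φ.hom
  refine ⟨ModuleCat.ofHom ψ, ?_⟩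
  ext x
  exact DFunLike.congr_fun hψ x

lemma SES.lift_of_proj (h : SES j p) (P : ModuleCat.{u} R) (hP : Module.Projective R P)
    (φ : P →ₗ[R] Z) : ∃ ψ : P →ₗ[R] Y, p.comp ψ = φ :=
  Module.projective_lifting_property p φ h.surj

/-- factor a map killing `j` through `p`. -/
lemma SES.descend (h : SES j p) (W : ModuleCat.{u} R) (φ : Y →ₗ[R] W) (hφ : φ.comp j = 0) :
    ∃ ψ : Z →ₗ[R] W, ψ.comp p = φ := by
  have hk : LinearMap.ker p ≤ LinearMap.ker φ := by
    intro y hy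
    obtain ⟨x, rfl⟩ := (h.exact y).1 hy
    exact DFunLike.congr_fun hφ x
  refine ⟨((LinearMap.ker p).liftQ φ hk).comp
    (p.quotKerEquivOfSurjective h.surj).symm.toLinearMap, ?_⟩
  ext y
  have : (p.quotKerEquivOfSurjective h.surj).symm (p y) = (LinearMap.ker p).mkQ y := by
    rw [LinearEquiv.symm_apply_eq]; rfl
  simp only [LinearMap.comp_apply, LinearEquiv.coe_coe]
  rw [this]
  exact Submodule.liftQ_apply _ _ _

end

lemma ses_ker {X Y : ModuleCat.{u} R} (f : X →ₗ[R] Y) (hf : Function.Surjective f) :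
    SES (X := ModuleCat.of R (LinearMap.ker f)) (LinearMap.ker f).subtype f :=
  ⟨Subtype.val_injective, LinearMap.exact_subtype_ker_map f, hf⟩

lemma ses_coker {X Y : ModuleCat.{u} R} (f : X →ₗ[R] Y) (hf : Function.Injective f) :
    SES (Z := ModuleCat.of R (Y ⧸ LinearMap.range f)) f (LinearMap.range f).mkQ :=
  ⟨hf, LinearMap.exact_map_mkQ_range f, Submodule.mkQ_surjective _⟩

/-- Coinductive data for Gorenstein projectives. -/
def IsGPClass (C : ModuleCat.{u} R → Prop) : Prop :=
  ∀ N, C N → VExt 1 N ∧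
    (∃ (P N' : ModuleCat.{u} R) (j : N →ₗ[R] P) (p : P →ₗ[R] N'),
      Module.Projective R P ∧ C N' ∧ SES j p) ∧
    (∃ (P N' : ModuleCat.{u} R) (j : N' →ₗ[R] P) (p : P →ₗ[R] N),
      Module.Projective R P ∧ C N' ∧ SES j p)

/-- The two-sided sequence of syzygies. -/
def zseq {T : Type*} (r l : T → T) (t : T) : ℤ → T
  | Int.ofNat n => l^[n] t
  | Int.negSucc n => r^[n+1] t

lemma zseq_rel {T : Type*} (r l : T → T) (t : T) (rel : T → T → Prop)
    (hr : ∀ t, rel t (r t)) (hl : ∀ t, rel (l t) t) (i : ℤ) :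
    rel (zseq r l t (i + 1)) (zseq r l t i) := by
  rcases i with n | n
  · change rel (l^[n+1] t) (l^[n] t)
    rw [Function.iterate_succ_apply']
    exact hl _
  · rcases n with _ | n
    · exact hr t
    · change rel (r^[n+1] t) (r^[n+1+1] t)
      rw [Function.iterate_succ_apply' r (n+1)]
      exact hr _

theorem gp_of_class (C : ModuleCat.{u} R → Prop) (hC : IsGPClass C) (M : ModuleCat.{u} R)
    (hM : C M) : IsGorensteinProjective R M := by
  classical
  let rel : Subtype C → Subtype C → Prop := fun N N' =>
    ∃ (P : ModuleCat.{u} R) (j : N.1 →ₗ[R] P) (p : P →ₗ[R] N'.1),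
      Module.Projective R P ∧ SES j p
  have hr : ∀ t : Subtype C, ∃ t', rel t t' := by
    intro t
    obtain ⟨-, ⟨P, N', j, p, hP, hN', h⟩, -⟩ := hC t.1 t.2
    exact ⟨⟨N', hN'⟩, P, j, p, hP, h⟩
  have hl : ∀ t : Subtype C, ∃ t', rel t' t := by
    intro t
    obtain ⟨-, -, ⟨P, N', j, p, hP, hN', h⟩⟩ := hC t.1 t.2
    exact ⟨⟨N', hN'⟩, P, j, p, hP, h⟩
  choose r hr using hr
  choose l hl using hl
  obtain ⟨Z, hZ0, hZ⟩ : ∃ Z : ℤ → Subtype C, Z 0 = ⟨M, hM⟩ ∧ ∀ i, rel (Z (i + 1)) (Z i) :=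
    ⟨zseq r l ⟨M, hM⟩, rfl, zseq_rel r l ⟨M, hM⟩ rel hr hl⟩
  have key : ∀ i : ℤ, ∃ (P : ModuleCat.{u} R) (j : (Z i).1 →ₗ[R] P)
      (q : ∀ k, k + 1 = i → (P →ₗ[R] (Z k).1)), Module.Projective R P ∧
        ∀ k (h : k + 1 = i), SES j (q k h) := by
    intro i
    obtain ⟨k, rfl⟩ : ∃ k, k + 1 = i := ⟨i - 1, by ring⟩
    obtain ⟨P, j, p, hP, h⟩ := hZ k
    refine ⟨P, j, fun k' hk' => (by
      obtain rfl : k' = k := by linarith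
      exact p), hP, ?_⟩
    intro k' hk'
    obtain rfl : k' = k := by linarith
    exact h
  choose P j q hP hS using key
  have hS' : ∀ i, SES (j (i+1)) (q (i+1) i rfl) := fun i => hS (i+1) i rfl
  have hj : ∀ i, Function.Injective (j i) := by
    intro i
    obtain ⟨k, rfl⟩ : ∃ k, k + 1 = i := ⟨i - 1, by ring⟩
    exact (hS' k).inj
  have hker : ∀ i, LinearMap.ker ((j i).comp (q (i+1) i rfl)) = LinearMap.range (j (i+1)) := by
    intro i
    rw [LinearMap.ker_comp_of_ker_eq_bot _ (LinearMap.ker_eq_bot.2 (hj i))]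
    exact (LinearMap.exact_iff.1 (hS' i).exact)
  have hran : ∀ i, LinearMap.range ((j i).comp (q (i+1) i rfl)) = LinearMap.range (j i) := by
    intro i
    exact LinearMap.range_comp_of_range_eq_top _ (LinearMap.range_eq_top.2 (hS' i).surj)
  refine ⟨P, fun i => (j i).comp (q (i+1) i rfl), hP, ?_, ?_, ?_, ?_⟩
  · intro i
    rw [← LinearMap.range_le_ker_iff, hker, hran]
  · intro i
    rw [hker, hran]
  · intro Q hQ i g hg
    have hg' : g.comp (j (i+1)) = 0 := by
      ext z
      obtain ⟨x, rfl⟩ := (hS' (i+1)).surj z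
      exact DFunLike.congr_fun hg x
    obtain ⟨g', rfl⟩ := (hS' i).descend Q g hg'
    obtain ⟨k, rfl⟩ : ∃ k, k + 1 = i := ⟨i - 1, by ring⟩
    obtain ⟨h, rfl⟩ := (hS' k).extend (hC _ (Z k).2).1 Q hQ g'
    exact ⟨h, rfl⟩
  · have e1 : (Z (-1 + 1)).1 ≃ₗ[R] LinearMap.range (j (-1+1)) :=
      LinearEquiv.ofInjective _ (hj _)
    have e2 := LinearEquiv.ofEq _ _ (hker (-1)).symm
    have h0 : (Z (-1+1)).1 = M := by
      change (Z 0).1 = M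
      rw [hZ0]
    have e0 : M ≃ₗ[R] (Z (-1+1)).1 := by
      rw [h0]
    exact ⟨e0.trans (e1.trans e2)⟩

/-- Syzygies of totally acyclic complexes. -/
def IsSyz (N : ModuleCat.{u} R) : Prop :=
  ∃ (P : ℤ → ModuleCat.{u} R) (f : ∀ i : ℤ, P (i + 1) →ₗ[R] P i),
    (∀ i, Module.Projective R (P i)) ∧
    (∀ i, (f i).comp (f (i + 1)) = 0) ∧
    (∀ i, LinearMap.range (f (i + 1)) = LinearMap.ker (f i)) ∧
    (∀ Q : ModuleCat.{u} R, Module.Projective R Q →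
      ∀ (i : ℤ) (g : P (i + 1) →ₗ[R] Q), g.comp (f (i + 1)) = 0 →
        ∃ h : P i →ₗ[R] Q, h.comp (f i) = g) ∧
    ∃ i : ℤ, Nonempty (↥N ≃ₗ[R] ↥(LinearMap.ker (f i)))

lemma SES.conj_right {X Y Z Z' : ModuleCat.{u} R} {j : X →ₗ[R] Y} {p : Y →ₗ[R] Z}
    (h : SES j p) (e : Z ≃ₗ[R] Z') : SES j (e.toLinearMap.comp p) := by
  refine ⟨h.inj, ?_, e.surjective.comp h.surj⟩
  intro y
  simpa using h.exact y

lemma SES.conj_left {X X' Y Z : ModuleCat.{u} R} {j : X →ₗ[R] Y} {p : Y →ₗ[R] Z}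
    (h : SES j p) (e : X' ≃ₗ[R] X) : SES (j.comp e.toLinearMap) p := by
  refine ⟨h.inj.comp e.injective, ?_, h.surj⟩
  intro y
  rw [h.exact y]
  constructor
  · rintro ⟨x, rfl⟩
    exact ⟨e.symm x, by simp⟩
  · rintro ⟨x, rfl⟩
    exact ⟨e x, rfl⟩

lemma ses_syz {X Y Z : ModuleCat.{u} R} (f : X →ₗ[R] Y) (g : Y →ₗ[R] Z)
    (h : LinearMap.range f = LinearMap.ker g) :
    SES (X := ModuleCat.of R (LinearMap.ker f)) (Y := X) (Z := ModuleCat.of R (LinearMap.ker g))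
      (LinearMap.ker f).subtype
      (f.codRestrict (LinearMap.ker g) (fun x => h ▸ LinearMap.mem_range_self f x)) := by
  refine ⟨Subtype.val_injective, ?_, ?_⟩
  · intro y
    constructor
    · intro hy
      exact ⟨⟨y, congrArg Subtype.val hy⟩, rfl⟩
    · rintro ⟨x, rfl⟩
      exact Subtype.ext x.2
  · rintro ⟨y, hy⟩
    rw [← h] at hy
    obtain ⟨x, rfl⟩ := hy
    exact ⟨x, rfl⟩

lemma isSyz_class : IsGPClass (R := R) IsSyz := by
  rintro N ⟨P, f, hP, hc, hr, hQ, i, ⟨e⟩⟩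
  have S : ∀ i, SES (X := ModuleCat.of R (LinearMap.ker (f (i+1)))) (Y := P (i+1+1))
      (Z := ModuleCat.of R (LinearMap.ker (f i)))
      (LinearMap.ker (f (i+1))).subtype
      ((f (i+1)).codRestrict (LinearMap.ker (f i))
        (fun x => hr i ▸ LinearMap.mem_range_self (f (i+1)) x)) :=
    fun i => ses_syz (f (i+1)) (f i) (hr i)
  have hker : ∀ i, IsSyz (ModuleCat.of R (LinearMap.ker (f i))) := fun i =>
    ⟨P, f, hP, hc, hr, hQ, i, ⟨LinearEquiv.refl _ _⟩⟩
  refine ⟨?_, ?_, ?_⟩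
  · refine ((S i).conj_right (Z' := N) e.symm).v_one (hP _) ?_
    intro Q hQp φ
    let c := ((f (i+1+1)).codRestrict (LinearMap.ker (f (i+1)))
        (fun x => hr (i+1) ▸ LinearMap.mem_range_self (f (i+1+1)) x))
    obtain ⟨ψ, hψ⟩ := hQ Q hQp (i+1+1) (φ.comp c) (by
      ext x
      have h0 : c (f (i+1+1+1) x) = 0 := Subtype.ext (DFunLike.congr_fun (hc (i+1+1)) x)
      change φ (c (f (i+1+1+1) x)) = 0
      rw [h0, map_zero])
    refine ⟨ψ, ?_⟩
    ext z
    obtain ⟨x, rfl⟩ := (S (i+1)).surj z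
    exact DFunLike.congr_fun hψ x
  · obtain ⟨k, rfl⟩ : ∃ k, k + 1 = i := ⟨i - 1, by ring⟩
    exact ⟨P (k+1+1), _, _, _, hP _, hker k, (S k).conj_left (X' := N) e⟩
  · exact ⟨P (i+1+1), _, _, _, hP _, hker (i+1), (S i).conj_right (Z' := N) e.symm⟩

lemma gp_iff_syz (N : ModuleCat.{u} R) : IsGorensteinProjective R N ↔ IsSyz N := by
  constructor
  · rintro ⟨P, f, hP, hc, hr, hQ, e⟩
    exact ⟨P, f, hP, hc, hr, hQ, -1, e⟩
  · exact gp_of_class _ isSyz_class N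

lemma gp_class : IsGPClass (IsGorensteinProjective R) := by
  have : IsGorensteinProjective R = IsSyz := funext fun N => propext (gp_iff_syz N)
  rw [this]
  exact isSyz_class

lemma gp_iso {N N' : ModuleCat.{u} R} (e : N' ≃ₗ[R] N) (h : IsGorensteinProjective R N) :
    IsGorensteinProjective R N' := by
  obtain ⟨P, f, hP, hc, hr, hQ, ⟨e'⟩⟩ := h
  exact ⟨P, f, hP, hc, hr, hQ, ⟨e.trans e'⟩⟩

lemma gp_proj (P : ModuleCat.{u} R) (hP : Module.Projective R P) :
    IsGorensteinProjective R P := by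
  refine gp_of_class (fun P => Module.Projective R P) ?_ P hP
  intro N hN
  refine ⟨v_proj N hN 0, ⟨N, ModuleCat.of R PUnit, LinearMap.id, 0, hN, ?_, ?_⟩,
    ⟨N, ModuleCat.of R PUnit, 0, LinearMap.id, hN, ?_, ?_⟩⟩
  · change Module.Projective R PUnit.{u+1}
    infer_instance
  · exact ⟨fun _ _ h => h, fun y => ⟨fun _ => ⟨y, rfl⟩, fun _ => rfl⟩,
      fun y => ⟨0, Subsingleton.elim (α := PUnit) _ _⟩⟩
  · change Module.Projective R PUnit.{u+1}
    infer_instance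
  · exact ⟨fun _ _ _ => Subsingleton.elim (α := PUnit) _ _, fun y => ⟨fun h => ⟨0, Eq.symm h⟩,
      fun ⟨x, h⟩ => Eq.symm h⟩, fun y => ⟨y, rfl⟩⟩

lemma gp_v (N : ModuleCat.{u} R) (h : IsGorensteinProjective R N) (k : ℕ) : VExt (k + 1) N := by
  induction k generalizing N with
  | zero => exact (gp_class N h).1
  | succ k ih =>
    obtain ⟨-, -, P, N', j, p, hP, hN', hs⟩ := gp_class N h
    exact hs.v_right (ih N' hN') (v_proj P hP _)

/-- Extension closure. -/
lemma gp_ext {X Y Z : ModuleCat.{u} R} {j : X →ₗ[R] Y} {p : Y →ₗ[R] Z} (h : SES j p)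
    (hX : IsGorensteinProjective R X) (hZ : IsGorensteinProjective R Z) :
    IsGorensteinProjective R Y := by
  refine gp_of_class (fun Y => ∃ (X Z : ModuleCat.{u} R) (j : X →ₗ[R] Y) (p : Y →ₗ[R] Z),
    SES j p ∧ IsGorensteinProjective R X ∧ IsGorensteinProjective R Z) ?_ Y ⟨X, Z, j, p, h, hX, hZ⟩
  clear h hX hZ j p X Y Z
  rintro Y ⟨X, Z, j, p, h, hX, hZ⟩
  obtain ⟨vX, ⟨P1, X1, j1, p1, hP1, hX1, h1⟩, ⟨P2, X2, j2, p2, hP2, hX2, h2⟩⟩ := gp_class X hX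
  obtain ⟨vZ, ⟨P3, Z3, j3, p3, hP3, hZ3, h3⟩, ⟨P4, Z4, j4, p4, hP4, hZ4, h4⟩⟩ := gp_class Z hZ
  refine ⟨h.v_mid vX vZ, ?_, ?_⟩
  · obtain ⟨θ, hθ⟩ := h.extend vZ P1 hP1 j1
    have hθ' : ∀ x, θ (j x) = j1 x := fun x => DFunLike.congr_fun hθ x
    let J : Y →ₗ[R] ModuleCat.of R (P1 × P3) := θ.prod (j3.comp p)
    have hJ : Function.Injective J := by
      rw [injective_iff_map_eq_zero]
      intro y hy
      have hy1 : θ y = 0 := congrArg Prod.fst hy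
      have hy2 : j3 (p y) = 0 := congrArg Prod.snd hy
      have hy3 : p y = 0 := h3.inj (hy2.trans (map_zero _).symm)
      obtain ⟨x, rfl⟩ := (h.exact y).1 hy3
      rw [hθ'] at hy1
      rw [h1.inj (hy1.trans (map_zero _).symm), map_zero]
    have hs := ses_coker J hJ
    obtain ⟨b, hb⟩ := hs.descend Z3 (p3.comp (LinearMap.snd R P1 P3)) (by
      ext y
      exact h3.exact.apply_apply_eq_zero _)
    obtain ⟨a, ha⟩ := h1.descend (ModuleCat.of R ((P1 × P3) ⧸ LinearMap.range J))
      ((LinearMap.range J).mkQ.comp (LinearMap.inl R P1 P3)) (by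
        ext x
        refine (Submodule.Quotient.mk_eq_zero _).2 ⟨j x, ?_⟩
        refine Prod.ext (hθ' x) ?_
        change j3 (p (j x)) = 0
        rw [h.exact.apply_apply_eq_zero, map_zero])
    have hb' : ∀ y, b ((LinearMap.range J).mkQ y) = p3 y.2 := fun y => DFunLike.congr_fun hb y
    have ha' : ∀ y, a (p1 y) = (LinearMap.range J).mkQ (y, 0) := fun y => DFunLike.congr_fun ha y
    refine ⟨_, _, _, _, ?_, ⟨X1, Z3, a, b, ?_, hX1, hZ3⟩, hs⟩
    · change Module.Projective R (P1 × P3)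
      infer_instance
    · refine ⟨?_, ?_, ?_⟩
      · rw [injective_iff_map_eq_zero]
        intro x hx
        obtain ⟨q, rfl⟩ := h1.surj x
        rw [ha'] at hx
        obtain ⟨y, hy⟩ := (Submodule.Quotient.mk_eq_zero _).1 hx
        have hy1 : θ y = q := congrArg Prod.fst hy
        have hy2 : j3 (p y) = 0 := congrArg Prod.snd hy
        have hy3 : p y = 0 := h3.inj (hy2.trans (map_zero _).symm)
        obtain ⟨x, rfl⟩ := (h.exact y).1 hy3
        rw [← hy1, hθ', h1.exact.apply_apply_eq_zero]
      · intro w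
        obtain ⟨⟨u, v⟩, rfl⟩ := hs.surj w
        constructor
        · intro hw
          rw [hb'] at hw
          obtain ⟨z, hz⟩ := (h3.exact v).1 hw
          obtain ⟨y, rfl⟩ := h.surj z
          refine ⟨p1 (u - θ y), ?_⟩
          rw [ha']
          refine (Submodule.Quotient.eq _).2 ⟨-y, ?_⟩
          rw [map_neg]
          refine Prod.ext ?_ ?_
          · change - θ y = u - θ y - u
            abel
          · change - j3 (p y) = 0 - v
            rw [hz]; abel
        · rintro ⟨x, hx⟩
          obtain ⟨q, rfl⟩ := h1.surj x
          rw [← hx, ha', hb', map_zero]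
      · intro z
        obtain ⟨v, rfl⟩ := h3.surj z
        exact ⟨(LinearMap.range J).mkQ (0, v), hb' _⟩
  · obtain ⟨σ, hσ⟩ := h.lift_of_proj P4 hP4 p4
    have hσ' : ∀ x, p (σ x) = p4 x := fun x => DFunLike.congr_fun hσ x
    let F : ModuleCat.of R (P2 × P4) →ₗ[R] Y := (j.comp p2).coprod σ
    have hF' : ∀ u v, F (u, v) = j (p2 u) + σ v := fun u v => rfl
    have hF : Function.Surjective F := by
      intro y
      obtain ⟨v, hv⟩ := h4.surj (p y)
      obtain ⟨x, hx⟩ := (h.exact (y - σ v)).1 (by rw [map_sub, hσ', hv, sub_self])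
      obtain ⟨u, rfl⟩ := h2.surj x
      exact ⟨(u, v), by rw [hF', hx]; abel⟩
    have hs := ses_ker F hF
    have hpF : ∀ w : LinearMap.ker F, p4 w.1.2 = 0 := by
      rintro ⟨⟨u, v⟩, hw⟩
      have := congrArg p hw
      rw [hF', map_add, h.exact.apply_apply_eq_zero, zero_add, hσ', map_zero] at this
      exact this
    -- the map to `Z4`
    let e4 := LinearEquiv.ofInjective j4 h4.inj
    have hr4 : ∀ w : LinearMap.ker F, w.1.2 ∈ LinearMap.range j4 := fun w =>
      (h4.exact _).1 (hpF w)
    let b : LinearMap.ker F →ₗ[R] Z4 := e4.symm.toLinearMap.comp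
      (((LinearMap.snd R P2 P4).comp (LinearMap.ker F).subtype).codRestrict (LinearMap.range j4) hr4)
    have hb : ∀ w, j4 (b w) = w.1.2 := by
      intro w
      have : e4 (b w) = ⟨w.1.2, hr4 w⟩ := e4.apply_symm_apply _
      exact congrArg Subtype.val this
    let a : X2 →ₗ[R] LinearMap.ker F := ((LinearMap.inl R P2 P4).comp j2).codRestrict
      (LinearMap.ker F) (by
        intro x
        change F (j2 x, 0) = 0
        rw [hF', h2.exact.apply_apply_eq_zero, map_zero, map_zero, add_zero])
    have ha : ∀ x, (a x).1 = (j2 x, 0) := fun x => rfl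
    refine ⟨_, _, _, _, ?_, ⟨X2, Z4, a, b, ?_, hX2, hZ4⟩, hs⟩
    · change Module.Projective R (P2 × P4)
      infer_instance
    · refine ⟨?_, ?_, ?_⟩
      · intro x x' hx
        exact h2.inj (congrArg (fun t => t.1.1) hx)
      · intro w
        constructor
        · intro hw
          have h0 : w.1.2 = 0 := by
            rw [← hb]
            exact (congrArg j4 hw).trans (map_zero _)
          have hw1 : F (w.1.1, w.1.2) = 0 := w.2
          rw [hF', h0, map_zero, add_zero] at hw1
          obtain ⟨x, hx⟩ := (h2.exact w.1.1).1 (h.inj (hw1.trans (map_zero _).symm))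
          exact ⟨x, Subtype.ext (Prod.ext hx h0.symm)⟩
        · rintro ⟨x, rfl⟩
          apply h4.inj
          rw [map_zero]
          exact hb (a x)
      · intro z
        obtain ⟨x, hx⟩ := (h.exact (σ (j4 z))).1 (by
          rw [hσ', h4.exact.apply_apply_eq_zero])
        obtain ⟨u, rfl⟩ := h2.surj x
        refine ⟨⟨(-u, j4 z), ?_⟩, ?_⟩
        · change F (-u, j4 z) = 0
          rw [hF', map_neg, map_neg, hx]; abel
        · apply h4.inj
          exact hb _

lemma gp_of_data (N : ModuleCat.{u} R) (hv : VExt 1 N)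
    (hr : ∃ (P N' : ModuleCat.{u} R) (j : N →ₗ[R] P) (p : P →ₗ[R] N'),
      Module.Projective R P ∧ IsGorensteinProjective R N' ∧ SES j p)
    (hl : ∃ (P N' : ModuleCat.{u} R) (j : N' →ₗ[R] P) (p : P →ₗ[R] N),
      Module.Projective R P ∧ IsGorensteinProjective R N' ∧ SES j p) :
    IsGorensteinProjective R N := by
  refine gp_of_class (fun N' => IsGorensteinProjective R N' ∨ N' = N) ?_ N (Or.inr rfl)
  rintro N' (h | rfl)
  · obtain ⟨h1, ⟨P1, X1, j1, p1, hP1, hX1, s1⟩, ⟨P2, X2, j2, p2, hP2, hX2, s2⟩⟩ := gp_class N' h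
    exact ⟨h1, ⟨P1, X1, j1, p1, hP1, Or.inl hX1, s1⟩, ⟨P2, X2, j2, p2, hP2, Or.inl hX2, s2⟩⟩
  · obtain ⟨P1, X1, j1, p1, hP1, hX1, s1⟩ := hr
    obtain ⟨P2, X2, j2, p2, hP2, hX2, s2⟩ := hl
    exact ⟨hv, ⟨P1, X1, j1, p1, hP1, Or.inl hX1, s1⟩, ⟨P2, X2, j2, p2, hP2, Or.inl hX2, s2⟩⟩

lemma gp_of_prod (P K : ModuleCat.{u} R) (hP : Module.Projective R P) (hK : VExt 1 K)
    (h : IsGorensteinProjective R (ModuleCat.of R (P × K))) : IsGorensteinProjective R K := by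
  obtain ⟨-, ⟨P1, X1, j1, p1, hP1, hX1, s1⟩, ⟨P2, X2, j2, p2, hP2, hX2, s2⟩⟩ := gp_class _ h
  refine gp_of_data K hK ?_ ?_
  · let J : K →ₗ[R] P1 := j1.comp (LinearMap.inr R P K)
    have hJ : Function.Injective J := s1.inj.comp (LinearMap.inr_injective (R := R))
    have hs := ses_coker J hJ
    refine ⟨_, _, _, _, hP1, ?_, hs⟩
    obtain ⟨b, hb⟩ := hs.descend X1 p1 (by
      ext k
      exact s1.exact.apply_apply_eq_zero _)
    have hb' : ∀ y, b ((LinearMap.range J).mkQ y) = p1 y := fun y => DFunLike.congr_fun hb y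
    let a : P →ₗ[R] (P1 ⧸ LinearMap.range J) :=
      (LinearMap.range J).mkQ.comp (j1.comp (LinearMap.inl R P K))
    have ha : ∀ x, a x = (LinearMap.range J).mkQ (j1 (x, 0)) := fun x => rfl
    refine gp_ext (j := a) (p := b) ⟨?_, ?_, ?_⟩ (gp_proj P hP) hX1
    · rw [injective_iff_map_eq_zero]
      intro x hx
      obtain ⟨k, hk⟩ := (Submodule.Quotient.mk_eq_zero _).1 hx
      have : ((0, k) : P × K) = (x, 0) := s1.inj hk
      exact (congrArg Prod.fst this).symm
    · intro w
      obtain ⟨y, rfl⟩ := hs.surj w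
      constructor
      · intro hw
        rw [hb'] at hw
        obtain ⟨⟨x, k⟩, rfl⟩ := (s1.exact y).1 hw
        refine ⟨x, ?_⟩
        rw [ha]
        refine (Submodule.Quotient.eq _).2 ⟨-k, ?_⟩
        change j1 (0, -k) = _
        rw [← map_sub]
        congr 1
        refine Prod.ext ?_ ?_
        · change 0 = x - x
          rw [sub_self]
        · change -k = 0 - k
          rw [zero_sub]
      · rintro ⟨x, hx⟩
        rw [← hx, ha, hb']
        exact s1.exact.apply_apply_eq_zero _
    · intro z
      obtain ⟨y, rfl⟩ := s1.surj z
      exact ⟨_, hb' y⟩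
  · let F : P2 →ₗ[R] K := (LinearMap.snd R P K).comp p2
    have hF : Function.Surjective F := (LinearMap.snd_surjective (R := R)).comp s2.surj
    have hs := ses_ker F hF
    refine ⟨_, _, _, _, hP2, ?_, hs⟩
    let a : X2 →ₗ[R] LinearMap.ker F := j2.codRestrict (LinearMap.ker F) (by
      intro x
      exact congrArg Prod.snd (s2.exact.apply_apply_eq_zero x))
    let b : LinearMap.ker F →ₗ[R] P :=
      ((LinearMap.fst R P K).comp p2).comp (LinearMap.ker F).subtype
    refine gp_ext (j := a) (p := b) ⟨?_, ?_, ?_⟩ hX2 (gp_proj P hP)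
    · intro x x' hx
      exact s2.inj (congrArg Subtype.val hx)
    · intro w
      constructor
      · intro hw
        obtain ⟨x, hx⟩ := (s2.exact w.1).1 (Prod.ext hw w.2)
        exact ⟨x, Subtype.ext hx⟩
      · rintro ⟨x, rfl⟩
        exact congrArg Prod.fst (s2.exact.apply_apply_eq_zero x)
    · intro z
      obtain ⟨y, hy⟩ := s2.surj (z, 0)
      exact ⟨⟨y, congrArg Prod.snd hy⟩, congrArg Prod.fst hy⟩

lemma gp_quot {G' G K : ModuleCat.{u} R} {α : G' →ₗ[R] G} {β : G →ₗ[R] K} (h : SES α β)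
    (hG' : IsGorensteinProjective R G') (hG : IsGorensteinProjective R G) (hK : VExt 1 K) :
    IsGorensteinProjective R K := by
  obtain ⟨-, ⟨P, C, j, c, hP, hC, s⟩, -⟩ := gp_class _ hG'
  obtain ⟨θ, hθ⟩ := h.extend hK P hP j
  have hθ' : ∀ x, θ (α x) = j x := fun x => DFunLike.congr_fun hθ x
  obtain ⟨γ, hγ⟩ := h.descend C (c.comp θ) (by
    ext x
    change c (θ (α x)) = 0
    rw [hθ', s.exact.apply_apply_eq_zero])
  have hγ' : ∀ x, γ (β x) = c (θ x) := fun x => DFunLike.congr_fun hγ x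
  refine gp_of_prod P K hP hK ?_
  let a : G →ₗ[R] ModuleCat.of R (P × K) := θ.prod β
  let b : ModuleCat.of R (P × K) →ₗ[R] C := c.coprod (-γ)
  have ha : ∀ g, a g = (θ g, β g) := fun g => rfl
  have hb : ∀ u k, b (u, k) = c u + - γ k := fun u k => rfl
  refine gp_ext (j := a) (p := b) ⟨?_, ?_, ?_⟩ hG hC
  · rw [injective_iff_map_eq_zero]
    intro g hg
    have h1 : θ g = 0 := congrArg Prod.fst hg
    have h2 : β g = 0 := congrArg Prod.snd hg
    obtain ⟨x, rfl⟩ := (h.exact g).1 h2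
    rw [hθ'] at h1
    rw [s.inj (h1.trans (map_zero _).symm), map_zero]
  · rintro ⟨u, k⟩
    obtain ⟨g, rfl⟩ := h.surj k
    rw [hb, hγ']
    constructor
    · intro hu
      obtain ⟨x, hx⟩ := (s.exact (u - θ g)).1 (by rw [map_sub, sub_eq_add_neg, hu])
      refine ⟨g + α x, ?_⟩
      rw [ha, map_add, map_add, hθ', hx, h.exact.apply_apply_eq_zero]
      refine Prod.ext ?_ ?_
      · change θ g + (u - θ g) = u
        abel
      · exact add_zero _
    · rintro ⟨g', hg'⟩
      have h1 : θ g' = u := congrArg Prod.fst hg'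
      have h2 : β g' = β g := congrArg Prod.snd hg'
      rw [← hγ', ← h2, hγ', h1]
      abel
  · intro z
    obtain ⟨u, rfl⟩ := s.surj z
    exact ⟨(u, 0), by rw [hb, map_zero, neg_zero, add_zero]⟩

lemma gpdimLE_iso (n : ℕ) {N N' : ModuleCat.{u} R} (e : N ≃ₗ[R] N') (h : GPdimLE R n N) :
    GPdimLE R n N' := by
  induction n generalizing N N' with
  | zero => exact gp_iso e.symm h
  | succ n ih =>
    obtain ⟨G, f, hf, hG, hk⟩ := h
    refine ⟨G, e.toLinearMap.comp f, e.surjective.comp hf, hG, ih ?_ hk⟩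
    exact LinearEquiv.ofEq _ _ (by rw [LinearEquiv.ker_comp])

lemma gpdimLE_v (n : ℕ) (N : ModuleCat.{u} R) (h : GPdimLE R n N) (k : ℕ) (hk : n ≤ k) :
    VExt (k + 1) N := by
  induction n generalizing N k with
  | zero => exact gp_v N h k
  | succ n ih =>
    obtain ⟨G, f, hf, hG, hker⟩ := h
    obtain ⟨k, rfl⟩ : ∃ k', k = k' + 1 := ⟨k - 1, by omega⟩
    exact (ses_ker f hf).v_right (ih _ hker k (by omega)) (gp_v G hG _)

/-! ### Restriction along a Frobenius extension -/

variable {A : Type u} [Ring A]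

/-- Restriction of scalars. -/
def res (ι : R →+* A) (M : ModuleCat.{u} A) : ModuleCat.{u} R :=
  @ModuleCat.of R _ M _ (Module.compHom M ι)

/-- Restriction of scalars on maps. -/
def resMap (ι : R →+* A) {M N : ModuleCat.{u} A} (f : M →ₗ[A] N) : res ι M →ₗ[R] res ι N where
  toFun := f
  map_add' := f.map_add
  map_smul' r m := f.map_smul (ι r) m

lemma resMap_apply (ι : R →+* A) {M N : ModuleCat.{u} A} (f : M →ₗ[A] N) (m : M) :
    resMap ι f m = f m := rfl

lemma ses_res (ι : R →+* A) {X Y Z : ModuleCat.{u} A} {j : X →ₗ[A] Y} {p : Y →ₗ[A] Z}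
    (h : SES j p) : SES (resMap ι j) (resMap ι p) :=
  ⟨h.inj, h.exact, h.surj⟩

/-- The data of a Frobenius extension. -/
structure FData (ι : R →+* A) where
  τ : A →+ R
  n : ℕ
  x : Fin n → A
  y : Fin n → A
  hl : ∀ (r : R) (a : A), τ (ι r * a) = r * τ a
  hr : ∀ (a : A) (r : R), τ (a * ι r) = τ a * r
  h1 : ∀ a : A, ∑ i, x i * ι (τ (y i * a)) = a
  h2 : ∀ a : A, ∑ i, ι (τ (a * x i)) * y i = a

variable {ι : R →+* A} (D : FData ι)

/-- The trace of an `R`-linear map. -/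
def FData.tr {M N : ModuleCat.{u} A} (ψ : M →+ N) (hψ : ∀ r m, ψ (ι r • m) = ι r • ψ m) :
    M →ₗ[A] N where
  toFun m := ∑ i, D.x i • ψ (D.y i • m)
  map_add' m m' := by
    simp only [smul_add, map_add, Finset.sum_add_distrib]
  map_smul' a m := by
    simp only [RingHom.id_apply, Finset.smul_sum]
    have e1 : ∀ i, a • D.x i • ψ (D.y i • m) =
        ∑ k, D.x k • ψ ((ι (D.τ (D.y k * a * D.x i)) * D.y i) • m) := by
      intro i
      rw [smul_smul]
      conv_lhs => rw [← D.h1 (a * D.x i)]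
      rw [Finset.sum_smul]
      refine Finset.sum_congr rfl fun k _ => ?_
      rw [mul_smul, mul_smul, hψ, mul_assoc]
    simp only [e1]
    rw [Finset.sum_comm]
    refine Finset.sum_congr rfl fun k _ => ?_
    rw [← Finset.smul_sum, ← map_sum, ← Finset.sum_smul, D.h2, mul_smul]

lemma FData.tr_apply {M N : ModuleCat.{u} A} (ψ : M →+ N)
    (hψ : ∀ r m, ψ (ι r • m) = ι r • ψ m) (m : M) :
    D.tr ψ hψ m = ∑ i, D.x i • ψ (D.y i • m) := rfl

include D

lemma FData.theta (Q : ModuleCat.{u} A) (hQ : Module.Projective A Q) :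
    ∃ θ : Q →+ Q, (∀ r q, θ (ι r • q) = ι r • θ q) ∧
      ∀ q, ∑ i, D.x i • θ (D.y i • q) = q := by
  obtain ⟨s, hs⟩ := hQ.out
  let π : (Q →₀ A) →ₗ[A] Q := Finsupp.linearCombination A id
  let θ0 : (Q →₀ A) →+ (Q →₀ A) := Finsupp.mapRange.addMonoidHom (ι.toAddMonoidHom.comp D.τ)
  have hθ0 : ∀ c q, θ0 c q = ι (D.τ (c q)) := fun c q => rfl
  refine ⟨(π.toAddMonoidHom.comp θ0).comp s.toAddMonoidHom, ?_, ?_⟩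
  · intro r q
    change π (θ0 (s (ι r • q))) = ι r • π (θ0 (s q))
    rw [← map_smul π, map_smul s]
    congr 1
    ext q'
    simp [hθ0, D.hl]
  · intro q
    change ∑ i, D.x i • π (θ0 (s (D.y i • q))) = q
    simp only [← map_smul π]
    rw [← map_sum π]
    have : ∑ i, D.x i • θ0 (s (D.y i • q)) = s q := by
      ext q'
      simp [Finsupp.finsetSum_apply, hθ0, D.h1]
    rw [this]
    exact hs q

lemma FData.proj_res (P : ModuleCat.{u} A) (hP : Module.Projective A P) :
    Module.Projective R (res ι P) := by
  obtain ⟨s, hs⟩ := hP.out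
  let t : A →+ (Fin D.n → R) :=
    { toFun := fun a i => D.τ (a * D.x i)
      map_zero' := by ext i; simp
      map_add' := fun a b => by ext i; simp [add_mul] }
  have ht : ∀ a i, t a i = D.τ (a * D.x i) := fun a i => rfl
  let T : (P →₀ A) →+ (P →₀ (Fin D.n → R)) := Finsupp.mapRange.addMonoidHom t
  let I : res ι P →ₗ[R] (P →₀ (Fin D.n → R)) :=
    { toFun := fun p => T (s p)
      map_add' := fun p q => (congrArg T (s.map_add p q)).trans (T.map_add _ _)
      map_smul' := fun r p => by
        change T (s (ι r • (show P from p))) = r • T (s p)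
        rw [map_smul s]
        ext q i
        change t (ι r * s p q) i = r * t (s p q) i
        rw [ht, ht, mul_assoc, D.hl] }
  let b : P → ((Fin D.n → R) →ₗ[R] res ι P) := fun p =>
    { toFun := fun c => ∑ i, (ι (c i) * D.y i) • (show P from p)
      map_add' := fun c c' => by
        simp only [Pi.add_apply, map_add, add_mul, add_smul]
        exact Finset.sum_add_distrib
      map_smul' := fun r c => by
        change _ = ι r • (∑ i, (ι (c i) * D.y i) • (show P from p))
        rw [Finset.smul_sum]
        refine Finset.sum_congr rfl fun i _ => ?_
        simp only [Pi.smul_apply, smul_eq_mul, map_mul, mul_assoc, mul_smul] }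
  have hb : ∀ p a, b p (t a) = a • p := by
    intro p a
    change ∑ i, (ι (t a i) * D.y i) • (show P from p) = a • p
    simp only [ht]
    rw [← Finset.sum_smul, D.h2]
  let B : (P →₀ (Fin D.n → R)) →ₗ[R] res ι P := Finsupp.lsum ℕ b
  refine Module.Projective.of_split I B ?_
  have key : ∀ c : P →₀ A, B (T c) = Finsupp.linearCombination A id c := by
    intro c
    induction c using Finsupp.induction_linear with
    | zero => rw [map_zero, map_zero, map_zero]; rfl
    | add f g hf hg => rw [map_add, map_add, map_add, hf, hg]; rfl
    | single p a =>
      have : T (Finsupp.single p a) = Finsupp.single p (t a) :=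
        Finsupp.mapRange_single (hf := map_zero t)
      rw [this, Finsupp.linearCombination_single]
      refine (Finsupp.lsum_single ℕ b p (t a)).trans (hb p a)
  ext p
  exact (key (s p)).trans (hs p)

lemma FData.v_one (K : ModuleCat.{u} A) (h : VExt 1 (res ι K)) : VExt 1 K := by
  let F : ModuleCat.of A (K →₀ A) →ₗ[A] K := Finsupp.linearCombination A id
  have hF : Function.Surjective F := Finsupp.linearCombination_id_surjective A K
  have hs := ses_ker F hF
  refine hs.v_one (by change Module.Projective A (K →₀ A); infer_instance) ?_
  intro Q hQ φ
  obtain ⟨ψ, hψ⟩ := (ses_res ι hs).extend h (res ι Q) (D.proj_res Q hQ) (resMap ι φ)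
  obtain ⟨θ, hθ, hθ'⟩ := D.theta Q hQ
  let ψ' : (ModuleCat.of A (K →₀ A)) →+ Q := θ.comp ψ.toAddMonoidHom
  refine ⟨D.tr ψ' ?_, ?_⟩
  · intro r m
    have : ψ (r • (show res ι (ModuleCat.of A (K →₀ A)) from m)) = r • ψ m := ψ.map_smul r m
    exact (congrArg θ this).trans (hθ r _)
  · ext k
    change ∑ i, D.x i • θ (ψ (D.y i • k.1)) = φ k
    have e : ∀ i, ψ (D.y i • k.1) = D.y i • φ k := by
      intro i
      have := DFunLike.congr_fun hψ (D.y i • k)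
      exact this.trans (φ.map_smul _ _)
    simp only [e]
    exact hθ' _

lemma FData.gp_res (M : ModuleCat.{u} A) (h : IsGorensteinProjective A M) :
    IsGorensteinProjective R (res ι M) := by
  obtain ⟨P, f, hP, hc, hr, hQ, ⟨e⟩⟩ := h
  refine ⟨fun i => res ι (P i), fun i => resMap ι (f i), fun i => D.proj_res _ (hP i), ?_, ?_, ?_, ?_⟩
  · intro i
    ext x
    exact DFunLike.congr_fun (hc i) x
  · intro i
    ext x
    exact SetLike.ext_iff.1 (hr i) x
  · intro Q hQp i g hg
    obtain ⟨s, hs⟩ := hQp.out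
    let g2 : P (i+1) →+ ModuleCat.of A (Q →₀ A) :=
      ((Finsupp.mapRange.addMonoidHom ι.toAddMonoidHom).comp s.toAddMonoidHom).comp g.toAddMonoidHom
    have hg2 : ∀ m q, (g2 m : Q →₀ A) q = ι (s (g m) q) := fun m q => rfl
    have hgs : ∀ (r : R) (m : P (i+1)), g (ι r • m) = r • g m := fun r m => g.map_smul r m
    have hg2' : ∀ r m, g2 (ι r • m) = ι r • g2 m := by
      intro r m
      refine Finsupp.ext (M := A) fun q => ?_
      change _ = ι r * (g2 m : Q →₀ A) q
      rw [hg2, hg2, hgs, map_smul, Finsupp.smul_apply, smul_eq_mul, map_mul]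
    have hgf : ∀ m : P (i+1+1), g (f (i+1) m) = 0 := fun m => DFunLike.congr_fun hg m
    obtain ⟨h', hh'⟩ := hQ (ModuleCat.of A (Q →₀ A))
      (by change Module.Projective A (Q →₀ A); infer_instance) i (D.tr g2 hg2') (by
        refine LinearMap.ext fun m => ?_
        change ∑ k, D.x k • g2 (D.y k • f (i+1) m) = 0
        refine Finset.sum_eq_zero fun k _ => ?_
        have : g2 (D.y k • f (i+1) m) = 0 := by
          refine Finsupp.ext (M := A) fun q => ?_
          rw [hg2, ← map_smul, hgf, map_zero]
          exact map_zero ι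
        rw [this, smul_zero])
    let t : (Q →₀ A) →+ (Q →₀ R) := Finsupp.mapRange.addMonoidHom D.τ
    have ht : ∀ c q, t c q = D.τ (c q) := fun c q => rfl
    let h0 : res ι (P i) →ₗ[R] (Q →₀ R) :=
      { toFun := fun m => t (h' m)
        map_add' := fun m m' => (congrArg t (h'.map_add m m')).trans (t.map_add _ _)
        map_smul' := fun r m => by
          change t (h' (ι r • (show P i from m))) = r • t (h' m)
          rw [map_smul h']
          ext q
          exact D.hl _ _ }
    refine ⟨(Finsupp.linearCombination R id).comp h0, ?_⟩
    ext m
    change Finsupp.linearCombination R id (t (h' (f i m))) = g m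
    have e1 : h' (f i m) = ∑ k, D.x k • g2 (D.y k • (show P (i+1) from m)) :=
      DFunLike.congr_fun hh' m
    have e2 : t (h' (f i m)) = s (g m) := by
      rw [e1]
      have e3 : g m = ∑ k, D.τ (D.x k) • g (D.y k • (show P (i+1) from m)) := by
        have e0 : ∀ m' : P (i+1), ∑ k, ι (D.τ (D.x k)) • D.y k • m' = m' := by
          intro m'
          have := D.h2 1
          simp only [one_mul] at this
          simp only [← mul_smul]
          rw [← Finset.sum_smul, this, one_smul]
        refine (congrArg g (e0 m).symm).trans ((map_sum g _ _).trans ?_)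
        exact Finset.sum_congr rfl fun k _ => hgs _ _
      rw [e3, map_sum s]
      refine (map_sum t _ _).trans (Finset.sum_congr rfl fun k _ => ?_)
      ext q
      rw [map_smul s]
      change D.τ (D.x k * (g2 _ : Q →₀ A) q) = D.τ (D.x k) * s _ q
      rw [hg2, D.hr]
    rw [e2]
    exact hs _
  · exact ⟨
      { toFun := e
        invFun := e.symm
        map_add' := e.map_add
        map_smul' := fun r m => e.map_smul (ι r) m
        left_inv := e.left_inv
        right_inv := e.right_inv }⟩

lemma FData.gpdimLE_res (n : ℕ) (M : ModuleCat.{u} A) (h : GPdimLE A n M) :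
    GPdimLE R n (res ι M) := by
  induction n generalizing M with
  | zero => exact D.gp_res M h
  | succ n ih =>
    obtain ⟨G, f, hf, hG, hk⟩ := h
    refine ⟨res ι G, resMap ι f, hf, D.gp_res G hG, gpdimLE_iso n ?_ (ih _ hk)⟩
    exact
      { toFun := fun x => ⟨x.1, x.2⟩
        invFun := fun x => ⟨x.1, x.2⟩
        map_add' := fun _ _ => rfl
        map_smul' := fun _ _ => rfl
        left_inv := fun _ => rfl
        right_inv := fun _ => rfl }

lemma FData.descend (m : ℕ) (M : ModuleCat.{u} A) (h : GPdimLE A (m + 1) M)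
    (hv : VExt (m + 1) (res ι M)) : GPdimLE A m M := by
  induction m generalizing M with
  | zero =>
    obtain ⟨G, f, hf, hG, hk⟩ := h
    exact gp_quot (ses_ker f hf) hk hG (D.v_one M hv)
  | succ m ih =>
    obtain ⟨G, f, hf, hG, hk⟩ := h
    refine ⟨G, f, hf, hG, ih _ hk ?_⟩
    exact (ses_res ι (ses_ker f hf)).v_left (gp_v _ (D.gp_res G hG) m) hv

lemma FData.le_of (n m : ℕ) (M : ModuleCat.{u} A) (h : GPdimLE A n M)
    (hm : GPdimLE R m (res ι M)) : ∃ k, k ≤ m ∧ GPdimLE A k M := by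
  induction n with
  | zero => exact ⟨0, Nat.zero_le _, h⟩
  | succ n ih =>
    by_cases hnm : n + 1 ≤ m
    · exact ⟨n + 1, hnm, h⟩
    · exact ih (D.descend n M h (gpdimLE_v m _ hm n (by omega)))

end GPAux

end Aux

section Statement

variable {R A : Type u} [Ring R] [Ring A]

theorem stmt5 (ι : R →+* A) (hF : IsFrobeniusExtension ι)
    (M : Type u) [AddCommGroup M] [Module A M]
    (h : GPdim A (ModuleCat.of A M) ≠ ⊤) :
    GPdim A (ModuleCat.of A M) = GPdim R (@ModuleCat.of R _ M _ (Module.compHom M ι)) := by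
  obtain ⟨-, τ, n, x, y, hl, hr, h1, h2⟩ := hF
  let D : GPAux.FData ι := ⟨τ, n, x, y, hl, hr, h1, h2⟩
  obtain ⟨N, hN⟩ : ∃ N, GPdimLE A N (ModuleCat.of A M) := by
    by_contra hcon
    push Not at hcon
    apply h
    unfold GPdim
    rw [sInf_eq_top]
    rintro k ⟨N, -, hN⟩
    exact absurd hN (hcon N)
  apply le_antisymm
  · refine le_sInf ?_
    rintro _ ⟨m, rfl, hm⟩
    obtain ⟨k, hk, hk'⟩ := D.le_of N m (ModuleCat.of A M) hN hm
    exact le_trans (b := (k : ℕ∞)) (sInf_le ⟨k, rfl, hk'⟩) (by exact_mod_cast hk)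
  · refine le_sInf ?_
    rintro _ ⟨m, rfl, hm⟩
    exact sInf_le ⟨m, rfl, D.gpdimLE_res m _ hm⟩

end Statement
end

section
/- Let R ⊂ A be a Frobenius extension of rings and let M be a left A-module. If the Gorenstein injective dimension of M over A is finite, then G-id_A M = G-id_R M, where on the right M is viewed as a left R-module by restriction of scalars. -/
universe u

/-- A left `R`-module `M` is Gorenstein injective if it is a cosyzygy of a totally acyclic
complex of injective modules: there is an acyclic complex `⋯ → I₁ → I₀ → I₋₁ → ⋯` of
injective `R`-modules which stays acyclic after applying `Hom_R(Q, -)` for every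
injective `R`-module `Q`, with `M ≅ ker (I₀ → I₋₁)`. -/
def IsGorensteinInjective (R : Type u) [Ring R] (M : ModuleCat.{u} R) : Prop :=
  ∃ (I : ℤ → ModuleCat.{u} R) (f : ∀ i : ℤ, I (i + 1) →ₗ[R] I i),
    (∀ i, Module.Injective R (I i)) ∧
    (∀ i, (f i).comp (f (i + 1)) = 0) ∧
    (∀ i, LinearMap.range (f (i + 1)) = LinearMap.ker (f i)) ∧
    (∀ Q : ModuleCat.{u} R, Module.Injective R Q →
      ∀ (i : ℤ) (g : Q →ₗ[R] I (i + 1)), (f i).comp g = 0 →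
        ∃ h : Q →ₗ[R] I (i + 1 + 1), (f (i + 1)).comp h = g) ∧
    Nonempty (↥M ≃ₗ[R] ↥(LinearMap.ker (f (-1))))

/-- `GIdimLE R n M` means that `M` admits a Gorenstein injective coresolution of length `n`,
i.e. an exact sequence `0 → M → G⁰ → G¹ → ⋯ → Gⁿ → 0` with all `Gⁱ` Gorenstein
injective. -/
def GIdimLE (R : Type u) [Ring R] : ℕ → ModuleCat.{u} R → Prop
  | 0, M => IsGorensteinInjective R M
  | n + 1, M => ∃ (G : ModuleCat.{u} R) (f : M →ₗ[R] G),
      Function.Injective f ∧ IsGorensteinInjective R G ∧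
      GIdimLE R n (ModuleCat.of R (↥G ⧸ LinearMap.range f))

/-- The Gorenstein injective dimension of a left `R`-module, in `ℕ∞`. -/
noncomputable def GIdim (R : Type u) [Ring R] (M : ModuleCat.{u} R) : ℕ∞ :=
  sInf {k : ℕ∞ | ∃ n : ℕ, k = (n : ℕ∞) ∧ GIdimLE R n M}

namespace GorAux

open CategoryTheory CategoryTheory.Abelian

section General

variable {S : Type u} [Ring S]

/-- Every map from an injective module lifts along `p`. -/
def Lifts {M N : ModuleCat.{u} S} (p : M →ₗ[S] N) : Prop :=
  ∀ Q : ModuleCat.{u} S, Module.Injective S Q → ∀ g : Q →ₗ[S] N,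
    ∃ h : Q →ₗ[S] M, p.comp h = g

/-- Short exact sequences of modules. -/
structure SES {M G C : ModuleCat.{u} S} (f : M →ₗ[S] G) (p : G →ₗ[S] C) : Prop where
  inj : Function.Injective f
  surj : Function.Surjective p
  ex : LinearMap.range f = LinearMap.ker p

/-- Vanishing of `Ext^(i+1)(Q, M)` for all injective `Q`. -/
def Van (i : ℕ) (M : ModuleCat.{u} S) : Prop :=
  ∀ Q : ModuleCat.{u} S, Module.Injective S Q → ∀ e : Ext Q M (i + 1), e = 0

theorem SES.zero {M G C : ModuleCat.{u} S} {f : M →ₗ[S] G} {p : G →ₗ[S] C} (h : SES f p) (x : M) :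
    p (f x) = 0 := by
  have : f x ∈ LinearMap.ker p := h.ex ▸ LinearMap.mem_range_self f x
  exact this

theorem SES.lift {M G C Q : ModuleCat.{u} S} {f : M →ₗ[S] G} {p : G →ₗ[S] C} (h : SES f p)
    (g : Q →ₗ[S] G) (hg : p.comp g = 0) : ∃ g' : Q →ₗ[S] M, f.comp g' = g := by
  have hm : ∀ x, g x ∈ LinearMap.range f := fun x => by
    rw [h.ex]; exact LinearMap.congr_fun hg x
  let e := LinearEquiv.ofInjective f h.inj
  refine ⟨e.symm.toLinearMap.comp (g.codRestrict _ hm), ?_⟩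
  ext x
  have : e (e.symm (g.codRestrict _ hm x)) = g.codRestrict _ hm x := e.apply_symm_apply _
  exact congrArg Subtype.val this

theorem SES.exact {M G C : ModuleCat.{u} S} {f : M →ₗ[S] G} {p : G →ₗ[S] C} (h : SES f p)
    {y : G} (hy : p y = 0) : ∃ x, f x = y := by
  have : y ∈ LinearMap.range f := h.ex ▸ hy
  exact this

theorem SES.short {M G C : ModuleCat.{u} S} {f : M →ₗ[S] G} {p : G →ₗ[S] C} (h : SES f p) :
    (ShortComplex.mk (ModuleCat.ofHom f) (ModuleCat.ofHom p)
      (by ext x; exact h.zero x)).ShortExact := by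
  refine ModuleCat.shortComplex_shortExact _ ?_ h.inj h.surj
  exact fun y => ⟨fun hy => h.exact hy, fun ⟨x, hx⟩ => hx ▸ h.zero x⟩

theorem SES.van0 {M G C : ModuleCat.{u} S} {f : M →ₗ[S] G} {p : G →ₗ[S] C} (h : SES f p)
    (hM : Van 0 M) : Lifts p := by
  intro Q hQ g
  obtain ⟨x, hx⟩ := Ext.covariant_sequence_exact₃ Q h.short (Ext.mk₀ (ModuleCat.ofHom g)) (zero_add 1)
    (hM Q hQ _)
  obtain ⟨t, rfl⟩ := Ext.addEquiv₀.symm.surjective x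
  refine ⟨t.hom, ?_⟩
  have h2 : t ≫ ModuleCat.ofHom p = ModuleCat.ofHom g := by
    apply Ext.addEquiv₀.symm.injective
    simpa using hx
  exact congrArg ModuleCat.Hom.hom h2

theorem SES.van0' {M G C : ModuleCat.{u} S} {f : M →ₗ[S] G} {p : G →ₗ[S] C} (h : SES f p)
    (hp : Lifts p) (hG : Van 0 G) : Van 0 M := by
  intro Q hQ e
  obtain ⟨x, hx⟩ := Ext.covariant_sequence_exact₁ Q h.short e (hG Q hQ _) rfl
  obtain ⟨t, rfl⟩ := Ext.addEquiv₀.symm.surjective x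
  obtain ⟨s, hs⟩ := hp Q hQ t.hom
  have : t = ModuleCat.ofHom s ≫ ModuleCat.ofHom p := by
    ext x; exact (LinearMap.congr_fun hs x).symm
  rw [← hx]
  subst this
  have hz := h.short.comp_extClass
  dsimp at hz
  simp only [Ext.addEquiv₀_symm_apply]
  rw [← Ext.mk₀_comp_mk₀, Ext.comp_assoc_of_second_deg_zero, hz, Ext.comp_zero]

theorem SES.vanS {M G C : ModuleCat.{u} S} {f : M →ₗ[S] G} {p : G →ₗ[S] C} (h : SES f p) {i : ℕ}
    (hC : Van i C) (hG : Van (i + 1) G) : Van (i + 1) M := by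
  intro Q hQ e
  obtain ⟨x, hx⟩ := Ext.covariant_sequence_exact₁ Q h.short e (hG Q hQ _) rfl
  rw [← hx, hC Q hQ x, Ext.zero_comp]

theorem SES.vanC {M G C : ModuleCat.{u} S} {f : M →ₗ[S] G} {p : G →ₗ[S] C} (h : SES f p) {i : ℕ}
    (hM : Van (i + 1) M) (hG : Van i G) : Van i C := by
  intro Q hQ e
  obtain ⟨x, hx⟩ := Ext.covariant_sequence_exact₃ Q h.short e rfl (hM Q hQ _)
  rw [← hx, hG Q hQ x, Ext.zero_comp]

theorem van_inj {I : ModuleCat.{u} S} (hI : Module.Injective S I) (i : ℕ) : Van i I := by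
  intro Q _ e
  have : CategoryTheory.Injective I := (Module.injective_iff_injective_object S I).mp hI
  exact Ext.eq_zero_of_injective e

theorem exists_inj (M : ModuleCat.{u} S) : ∃ (E C : ModuleCat.{u} S) (f : M →ₗ[S] E)
    (p : E →ₗ[S] C), Module.Injective S E ∧ SES f p := by
  obtain ⟨E, hE, i, hi⟩ : ∃ (E : ModuleCat.{u} S), CategoryTheory.Injective E ∧
      ∃ i : M ⟶ E, Mono i :=
    ⟨CategoryTheory.Injective.under M, inferInstance, CategoryTheory.Injective.ι M, inferInstance⟩
  let f : M →ₗ[S] E := i.hom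
  refine ⟨E, ModuleCat.of S (E ⧸ LinearMap.range f), f,
    (LinearMap.range f).mkQ, ?_, ?_, ?_, ?_⟩
  · exact (Module.injective_iff_injective_object S _).mpr hE
  · exact (ModuleCat.mono_iff_injective i).mp hi
  · exact Submodule.mkQ_surjective _
  · exact (Submodule.ker_mkQ _).symm

/-- One step of a proper left injective resolution. -/
def LStep (P : ModuleCat.{u} S → Prop) (N : ModuleCat.{u} S) : Prop :=
  ∃ (K J : ModuleCat.{u} S) (k : K →ₗ[S] J) (p : J →ₗ[S] N),
    Module.Injective S J ∧ SES k p ∧ Lifts p ∧ P K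

/-- Existence of a proper left injective resolution (coinductively). -/
def LRes (N : ModuleCat.{u} S) : Prop :=
  ∃ P : ModuleCat.{u} S → Prop, P N ∧ ∀ N, P N → LStep P N

theorem LStep.mono {P P' : ModuleCat.{u} S → Prop} (h : ∀ N, P N → P' N) {N : ModuleCat.{u} S} :
    LStep P N → LStep P' N := by
  rintro ⟨K, J, k, p, h1, h2, h3, h4⟩
  exact ⟨K, J, k, p, h1, h2, h3, h _ h4⟩

theorem LRes.step {N : ModuleCat.{u} S} : LRes N → LStep LRes N := by
  rintro ⟨P, hN, hP⟩
  exact (hP N hN).mono fun K hK => ⟨P, hK, hP⟩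

theorem LStep.res {N : ModuleCat.{u} S} (h : LStep LRes N) : LRes N := by
  refine ⟨fun N => LStep LRes N, h, fun N hN => hN.mono fun K hK => hK.step⟩

theorem SES.equiv {M G C D : ModuleCat.{u} S} {f : M →ₗ[S] G} {p : G →ₗ[S] C} (h : SES f p)
    (e : C ≃ₗ[S] D) : SES f (e.toLinearMap.comp p) := by
  refine ⟨h.inj, e.surjective.comp h.surj, ?_⟩
  rw [h.ex]; ext x; simp

theorem Lifts.equiv {G C D : ModuleCat.{u} S} {p : G →ₗ[S] C} (h : Lifts p)
    (e : C ≃ₗ[S] D) : Lifts (e.toLinearMap.comp p : G →ₗ[S] D) := by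
  intro Q hQ g
  obtain ⟨t, ht⟩ := h Q hQ (e.symm.toLinearMap.comp g)
  refine ⟨t, ?_⟩
  rw [LinearMap.comp_assoc, ht]; ext x; simp

theorem LStep.equiv {P : ModuleCat.{u} S → Prop} {C D : ModuleCat.{u} S} (h : LStep P C)
    (e : C ≃ₗ[S] D) : LStep P D := by
  obtain ⟨K, J, k, p, h1, h2, h3, h4⟩ := h
  exact ⟨K, J, k, e.toLinearMap.comp p, h1, h2.equiv e, h3.equiv e, h4⟩

theorem LRes.equiv {C D : ModuleCat.{u} S} (h : LRes C) (e : C ≃ₗ[S] D) : LRes D :=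
  (h.step.equiv e).res

theorem SES.kerEquiv {M G C : ModuleCat.{u} S} {f : M →ₗ[S] G} {p : G →ₗ[S] C} (h : SES f p) :
    Nonempty (M ≃ₗ[S] LinearMap.ker p) :=
  ⟨(LinearEquiv.ofInjective f h.inj).trans (LinearEquiv.ofEq _ _ h.ex)⟩

theorem SES.ofKer {G C : ModuleCat.{u} S} {p : G →ₗ[S] C} (hp : Function.Surjective p) :
    SES (M := ModuleCat.of S (LinearMap.ker p)) (LinearMap.ker p).subtype p :=
  ⟨Subtype.val_injective, hp, Submodule.range_subtype _⟩

theorem lres_inj {I : ModuleCat.{u} S} (hI : Module.Injective S I) : LRes I := by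
  refine ⟨fun N => Module.Injective S N, hI, fun N hN => ?_⟩
  refine ⟨ModuleCat.of S PUnit, N, 0, LinearMap.id, hN, ⟨?_, ?_, ?_⟩, ?_, ⟨?_⟩⟩
  · intro x y _; rfl
  · exact fun x => ⟨x, rfl⟩
  · simp
  · exact fun Q _ g => ⟨g, rfl⟩
  · intros; exact ⟨0, fun _ => rfl⟩

theorem lres_ext {N' P N'' : ModuleCat.{u} S} {f : N' →ₗ[S] P} {p : P →ₗ[S] N''} (h : SES f p)
    (hp : Lifts p) (h' : LRes N') (h'' : LRes N'') : LRes P := by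
  refine ⟨fun P => ∃ (N' N'' : ModuleCat.{u} S) (f : N' →ₗ[S] P) (p : P →ₗ[S] N''),
    SES f p ∧ Lifts p ∧ LRes N' ∧ LRes N'', ⟨N', N'', f, p, h, hp, h', h''⟩, ?_⟩
  clear h hp h' h'' f p
  rintro P ⟨N', N'', f, p, h, hp, h', h''⟩
  obtain ⟨K', J', k', q', hJ', hs', hl', hK'⟩ := h'.step
  obtain ⟨K'', J'', k'', q'', hJ'', hs'', hl'', hK''⟩ := h''.step
  obtain ⟨s, hs⟩ := hp J'' hJ'' q''
  have hs : ∀ x, p (s x) = q'' x := LinearMap.congr_fun hs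
  obtain ⟨e'⟩ := hs'.kerEquiv
  obtain ⟨e''⟩ := hs''.kerEquiv
  let q : ModuleCat.of S (J' × J'') →ₗ[S] P := (f.comp q').coprod s
  have hq : ∀ a b, q (a, b) = f (q' a) + s b := fun a b => by simp [q]
  have qs : Function.Surjective q := by
    intro x
    obtain ⟨b, hb⟩ := hs''.surj (p x)
    obtain ⟨y, hy⟩ := h.exact (y := x - s b) (by simp [hs, hb])
    obtain ⟨a, rfl⟩ := hs'.surj y
    exact ⟨(a, b), by rw [hq, hy]; simp⟩
  refine ⟨_, ModuleCat.of S (J' × J''), _, q, ?_, SES.ofKer qs, ?_, ?_⟩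
  · constructor
    intro X Y _ _ _ _ i hi g
    obtain ⟨t1, h1⟩ := hJ'.out i hi ((LinearMap.fst S J' J'').comp g)
    obtain ⟨t2, h2⟩ := hJ''.out i hi ((LinearMap.snd S J' J'').comp g)
    exact ⟨t1.prod t2, fun x => Prod.ext (h1 x) (h2 x)⟩
  · intro Q hQ g
    obtain ⟨t, ht⟩ := hl'' Q hQ (p.comp g)
    have ht := LinearMap.congr_fun ht
    obtain ⟨g', hg'⟩ := h.lift (g - s.comp t) (by
      ext x; have := ht x; simp at this; simp [hs, this])
    obtain ⟨t', ht'⟩ := hl' Q hQ g'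
    refine ⟨t'.prod t, ?_⟩
    ext x
    have h1 := LinearMap.congr_fun ht' x
    have h2 := LinearMap.congr_fun hg' x
    simp at h1 h2
    change q (t' x, t x) = g x
    rw [hq, h1, h2]; simp
  · have hk : ∀ z : LinearMap.ker q, f (q' z.1.1) + s z.1.2 = 0 := fun z => by
      rw [← hq]; exact z.2
    refine ⟨ModuleCat.of S (LinearMap.ker q'), ModuleCat.of S (LinearMap.ker q''),
      ((LinearMap.inl S J' J'').comp (LinearMap.ker q').subtype).codRestrict _ ?_,
      ((LinearMap.snd S J' J'').comp (LinearMap.ker q).subtype).codRestrict _ ?_, ⟨?_, ?_, ?_⟩,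
      ?_, hK'.equiv e', hK''.equiv e''⟩
    · rintro ⟨x, hx⟩
      have hx : q' x = 0 := hx
      change q (x, 0) = 0
      rw [hq, hx]; simp
    · intro z
      change q'' z.1.2 = 0
      have := congrArg p (hk z)
      simpa [h.zero, hs] using this
    · intro x y hxy
      exact Subtype.ext (congrArg (fun z => z.1.1) hxy)
    · rintro ⟨b, hb⟩
      have hb' : q'' b = 0 := hb
      obtain ⟨y, hy⟩ := h.exact (y := s b) (by rw [hs, hb'])
      obtain ⟨a, rfl⟩ := hs'.surj y
      refine ⟨⟨(-a, b), ?_⟩, rfl⟩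
      change q (-a, b) = 0
      rw [hq, ← hy]; simp
    · ext z
      constructor
      · rintro ⟨x, rfl⟩
        rfl
      · intro hz
        have hz : z.1.2 = 0 := congrArg Subtype.val hz
        have h1 := hk z
        rw [hz, map_zero, add_zero] at h1
        have h2 : q' z.1.1 = 0 := h.inj (by rw [h1, map_zero])
        exact ⟨⟨z.1.1, h2⟩, Subtype.ext (Prod.ext rfl hz.symm)⟩
    · intro Q hQ t
      let t0 : Q →ₗ[S] J'' := (LinearMap.ker q'').subtype.comp t
      have ht0 : ∀ x, q'' (t0 x) = 0 := fun x => (t x).2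
      obtain ⟨g', hg'⟩ := h.lift (s.comp t0) (by ext x; simp [hs, ht0])
      obtain ⟨t', ht'⟩ := hl' Q hQ g'
      refine ⟨((-t').prod t0).codRestrict _ ?_, ?_⟩
      · intro x
        change q (-t' x, t0 x) = 0
        have h1 := LinearMap.congr_fun ht' x
        have h2 := LinearMap.congr_fun hg' x
        simp at h1 h2
        rw [hq, map_neg, h1, map_neg, h2]; simp
      · ext x; rfl

theorem lres_of_prod {M J : ModuleCat.{u} S} (hJ : Module.Injective S J)
    (h : LRes (ModuleCat.of S (M × J))) : LRes M := by
  obtain ⟨K, L, k, q, hL, hs, hl, hK⟩ := h.step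
  obtain ⟨e⟩ := hs.kerEquiv
  let r : L →ₗ[S] M := (LinearMap.fst S M J).comp q
  have rs : Function.Surjective r := fun m => by
    obtain ⟨x, hx⟩ := hs.surj (m, 0)
    exact ⟨x, congrArg Prod.fst hx⟩
  refine LStep.res ⟨_, L, _, r, hL, SES.ofKer rs, ?_, ?_⟩
  · intro Q hQ g
    obtain ⟨t, ht⟩ := hl Q hQ ((LinearMap.inl S M J).comp g)
    refine ⟨t, ?_⟩
    ext x
    exact congrArg Prod.fst (LinearMap.congr_fun ht x)
  · refine lres_ext (N' := K) (N'' := J)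
      (f := k.codRestrict (LinearMap.ker r) fun x => congrArg Prod.fst (hs.zero x))
      (p := ((LinearMap.snd S M J).comp q).comp (LinearMap.ker r).subtype) ⟨?_, ?_, ?_⟩ ?_ hK
      (lres_inj hJ)
    · intro x y hxy
      exact hs.inj (congrArg Subtype.val hxy)
    · intro j
      obtain ⟨x, hx⟩ := hs.surj (0, j)
      exact ⟨⟨x, congrArg Prod.fst hx⟩, congrArg Prod.snd hx⟩
    · ext z
      constructor
      · rintro ⟨x, rfl⟩
        exact congrArg Prod.snd (hs.zero x)
      · intro hz
        obtain ⟨x, hx⟩ := hs.exact (y := z.1) (Prod.ext z.2 hz)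
        exact ⟨x, Subtype.ext hx⟩
    · intro Q hQ g
      obtain ⟨t, ht⟩ := hl Q hQ ((LinearMap.inr S M J).comp g)
      have ht := LinearMap.congr_fun ht
      refine ⟨t.codRestrict _ fun x => congrArg Prod.fst (ht x), ?_⟩
      ext x
      exact congrArg Prod.snd (ht x)

theorem lres_ker {M G C : ModuleCat.{u} S} {f : M →ₗ[S] G} {g : G →ₗ[S] C} (h : SES f g)
    (hM : Van 0 M) (hG : LRes G) (hC : LRes C) : LRes M := by
  obtain ⟨K, J, k, c, hJ, hs, hl, hK⟩ := hC.step
  obtain ⟨s, hsc⟩ := h.van0 hM J hJ c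
  have hsc : ∀ x, g (s x) = c x := LinearMap.congr_fun hsc
  apply lres_of_prod hJ
  let π : ModuleCat.of S (M × J) →ₗ[S] G := f.coprod s
  have hπ : ∀ a b, π (a, b) = f a + s b := fun a b => by simp [π]
  have hk : ∀ x, ∃ m, f m = s (k x) := fun x => h.exact (by rw [hsc, hs.zero])
  obtain ⟨m, hm⟩ := h.lift (s.comp k) (by ext x; simp [hsc, hs.zero])
  have hm : ∀ x, f (m x) = s (k x) := LinearMap.congr_fun hm
  refine lres_ext (N' := K) (N'' := G) (f := (-m).prod k) (p := π) ⟨?_, ?_, ?_⟩ ?_ hK hG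
  · intro x y hxy
    exact hs.inj (congrArg Prod.snd hxy)
  · intro x
    obtain ⟨b, hb⟩ := hs.surj (g x)
    obtain ⟨a, ha⟩ := h.exact (y := x - s b) (by simp [hsc, hb])
    exact ⟨(a, b), by rw [hπ, ha]; simp⟩
  · ext ⟨a, b⟩
    constructor
    · rintro ⟨x, hx⟩
      have h1 : -m x = a := congrArg Prod.fst hx
      have h2 : k x = b := congrArg Prod.snd hx
      change π (a, b) = 0
      rw [hπ, ← h1, ← h2, map_neg, hm]; simp
    · intro hz
      have hz : π (a, b) = 0 := hz
      rw [hπ] at hz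
      obtain ⟨x, hx⟩ := hs.exact (y := b) (by
        have := congrArg g hz
        simpa [h.zero, hsc] using this)
      refine ⟨x, Prod.ext (h.inj ?_) hx⟩
      change f (-m x) = f a
      rw [map_neg, hm, hx]
      exact (eq_neg_of_add_eq_zero_left hz).symm
  · intro Q hQ t
    obtain ⟨v, hv⟩ := hl Q hQ (g.comp t)
    have hv := LinearMap.congr_fun hv
    obtain ⟨w, hw⟩ := h.lift (t - s.comp v) (by
      ext x; have := hv x; simp at this; simp [hsc, this])
    have hw := LinearMap.congr_fun hw
    refine ⟨w.prod v, ?_⟩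
    ext x
    change π (w x, v x) = t x
    have := hw x
    simp at this
    rw [hπ, this]; simp

theorem gi_out {M : ModuleCat.{u} S} (h : IsGorensteinInjective S M) :
    LRes M ∧ ∀ i, Van i M := by
  obtain ⟨I, f, hI, h0, hex, hl, ⟨e⟩⟩ := h
  have key : ∀ (i : ℤ) (N : ModuleCat.{u} S), (N ≃ₗ[S] LinearMap.ker (f i)) →
      ∃ (k : ModuleCat.of S (LinearMap.ker (f (i + 1))) →ₗ[S] I (i + 1 + 1))
        (p : I (i + 1 + 1) →ₗ[S] N), SES k p ∧ Lifts p := by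
    intro i N e
    have hm : ∀ x, f (i + 1) x ∈ LinearMap.ker (f i) := fun x => LinearMap.congr_fun (h0 i) x
    let p0 : I (i + 1 + 1) →ₗ[S] ModuleCat.of S (LinearMap.ker (f i)) :=
      (f (i + 1)).codRestrict _ hm
    have hp0 : SES (M := ModuleCat.of S (LinearMap.ker (f (i + 1))))
        (LinearMap.ker (f (i + 1))).subtype p0 := by
      refine ⟨Subtype.val_injective, ?_, ?_⟩
      · rintro ⟨y, hy⟩
        rw [← hex i] at hy
        obtain ⟨x, hx⟩ := hy
        exact ⟨x, Subtype.ext hx⟩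
      · rw [Submodule.range_subtype]
        exact (LinearMap.ker_codRestrict _ _ _).symm
    have hl0 : Lifts p0 := by
      intro Q hQ g
      obtain ⟨t, ht⟩ := hl Q hQ i ((LinearMap.ker (f i)).subtype.comp g) (by
        ext x; exact (g x).2)
      refine ⟨t, ?_⟩
      refine LinearMap.ext fun x => Subtype.ext (LinearMap.congr_fun ht x)
    exact ⟨_, _, hp0.equiv e.symm, hl0.equiv e.symm⟩
  constructor
  · refine ⟨fun N => ∃ i, Nonempty (N ≃ₗ[S] LinearMap.ker (f i)), ⟨_, ⟨e⟩⟩, ?_⟩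
    rintro N ⟨i, ⟨e⟩⟩
    obtain ⟨k, p, h1, h2⟩ := key i N e
    exact ⟨_, _, k, p, hI _, h1, h2, i + 1, ⟨LinearEquiv.refl _ _⟩⟩
  · have h1 : ∀ (n : ℕ) (i : ℤ), Van n (ModuleCat.of S (LinearMap.ker (f i))) := by
      intro n
      induction n with
      | zero =>
        intro i
        obtain ⟨j, rfl⟩ : ∃ j, i = j + 1 := ⟨i - 1, by ring⟩
        obtain ⟨k, p, h1, h2⟩ := key j (ModuleCat.of S _) (LinearEquiv.refl _ _)
        exact h1.van0' h2 (van_inj (hI _) 0)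
      | succ n ih =>
        intro i
        obtain ⟨j, rfl⟩ : ∃ j, i = j + 1 := ⟨i - 1, by ring⟩
        obtain ⟨k, p, h1, h2⟩ := key j (ModuleCat.of S _) (LinearEquiv.refl _ _)
        exact h1.vanS (ih j) (van_inj (hI _) _)
    intro n
    have e2 : ModuleCat.of S (LinearMap.ker (f (-1))) ≅ M := (e.toModuleIso).symm
    intro Q hQ x
    have h2 := h1 n (-1) Q hQ (x.comp (Ext.mk₀ e2.inv) (add_zero _))
    have h3 := congrArg (fun y => Ext.comp y (Ext.mk₀ e2.hom) (add_zero _)) h2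
    simpa using h3

theorem gi_in {M : ModuleCat.{u} S} (hM : LRes M) (hV : ∀ i, Van i M) :
    IsGorensteinInjective S M := by
  let D := {N : ModuleCat.{u} S // LRes N ∧ ∀ i, Van i N}
  let T : D → D → Prop := fun a b => ∃ (J : ModuleCat.{u} S) (k : a.1 →ₗ[S] J) (p : J →ₗ[S] b.1),
    Module.Injective S J ∧ SES k p ∧ Lifts p
  have hL : ∀ b : D, ∃ a : D, T a b := by
    rintro ⟨N, hN, hV⟩
    obtain ⟨K, J, k, p, hJ, hs, hl, hK⟩ := hN.step
    refine ⟨⟨K, hK, ?_⟩, J, k, p, hJ, hs, hl⟩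
    intro i
    cases i with
    | zero => exact hs.van0' hl (van_inj hJ 0)
    | succ i => exact hs.vanS (hV i) (van_inj hJ _)
  have hR : ∀ a : D, ∃ b : D, T a b := by
    rintro ⟨N, hN, hV⟩
    obtain ⟨E, C, k, p, hE, hs⟩ := exists_inj N
    have hl := hs.van0 (hV 0)
    refine ⟨⟨C, LStep.res ⟨N, E, k, p, hE, hs, hl, hN⟩, ?_⟩, E, k, p, hE, hs, hl⟩
    intro i
    exact hs.vanC (hV _) (van_inj hE _)
  choose l hl using hL
  choose r hr using hR
  let M0 : D := ⟨M, hM, hV⟩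
  let Z0 : ℤ → D := fun i => match i with
    | Int.ofNat n => l^[n] M0
    | Int.negSucc n => r^[n + 1] M0
  have hZ0 : ∀ i, T (Z0 (i + 1)) (Z0 i) := by
    intro i
    cases i with
    | ofNat n =>
      change T (l^[n + 1] M0) (l^[n] M0)
      rw [Function.iterate_succ_apply']
      exact hl _
    | negSucc n =>
      have : Z0 (Int.negSucc n + 1) = r^[n] M0 := by
        cases n with
        | zero => rfl
        | succ n => rfl
      rw [this]
      change T _ (r^[n + 1] M0)
      rw [Function.iterate_succ_apply']
      exact hr _
  let Z : ℤ → D := fun i => Z0 (i - 1)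
  have hZ : ∀ i, T (Z (i + 1)) (Z i) := by
    intro i
    have : Z (i + 1) = Z0 (i - 1 + 1) := by simp only [Z]; congr 1; ring
    rw [this]
    exact hZ0 _
  have hZ1 : Z (-1 + 1 + 1) = M0 := rfl
  clear_value Z
  choose J k p hJ hs hlift using hZ
  refine ⟨J, fun i => (k i).comp (p (i + 1)), hJ, ?_, ?_, ?_, ?_⟩
  · intro i
    ext x
    have : p (i + 1) (k (i + 1) (p (i + 1 + 1) x)) = 0 := (hs (i + 1)).zero _
    simp [this]
  · intro i
    ext y
    constructor
    · rintro ⟨x, rfl⟩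
      have : p (i + 1) (k (i + 1) (p (i + 1 + 1) x)) = 0 := (hs (i + 1)).zero _
      simp [this]
    · intro hy
      have hy : k i (p (i + 1) y) = 0 := hy
      have hy2 : p (i + 1) y = 0 := (hs i).inj (by rw [hy, map_zero])
      obtain ⟨z, rfl⟩ := (hs (i + 1)).exact hy2
      obtain ⟨x, rfl⟩ := (hs (i + 1 + 1)).surj z
      exact ⟨x, rfl⟩
  · intro Q hQ i g hg
    have hg2 : (p (i + 1)).comp g = 0 := by
      ext x
      have : k i (p (i + 1) (g x)) = 0 := LinearMap.congr_fun hg x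
      exact (hs i).inj (this.trans (map_zero (k i)).symm)
    obtain ⟨g', hg'⟩ := (hs (i + 1)).lift g hg2
    obtain ⟨t, ht⟩ := hlift (i + 1 + 1) Q hQ g'
    exact ⟨t, by rw [LinearMap.comp_assoc, ht, hg']⟩
  · obtain ⟨e⟩ := (hs (-1 + 1)).kerEquiv
    rw [hZ1] at e
    refine ⟨e.trans (LinearEquiv.ofEq _ _ ?_)⟩
    ext x
    constructor
    · intro hx
      have hx : p (-1 + 1) x = 0 := hx
      change k (-1) (p (-1 + 1) x) = 0
      rw [hx, map_zero]
    · intro hx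
      have hx : k (-1) (p (-1 + 1) x) = 0 := hx
      exact (hs (-1)).inj (by rw [hx, map_zero])

theorem SES.ofQuot {M G : ModuleCat.{u} S} {f : M →ₗ[S] G} (hf : Function.Injective f) :
    SES (C := ModuleCat.of S (G ⧸ LinearMap.range f)) f (LinearMap.range f).mkQ :=
  ⟨hf, Submodule.mkQ_surjective _, (Submodule.ker_mkQ _).symm⟩

theorem gidim_van : ∀ (m : ℕ) (M : ModuleCat.{u} S), GIdimLE S m M → ∀ i, m ≤ i → Van i M := by
  intro m
  induction m with
  | zero => exact fun M h i _ => (gi_out h).2 i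
  | succ m ih =>
    rintro M ⟨G, f, hf, hG, hC⟩ i hi
    obtain ⟨j, rfl⟩ : ∃ j, i = j + 1 := ⟨i - 1, by omega⟩
    exact (SES.ofQuot hf).vanS (ih _ hC j (by omega)) ((gi_out hG).2 _)

theorem gidim_desc : ∀ (m : ℕ) (M : ModuleCat.{u} S), GIdimLE S (m + 1) M →
    (∀ i, m ≤ i → Van i M) → GIdimLE S m M := by
  intro m
  induction m with
  | zero =>
    rintro M ⟨G, f, hf, hG, hC⟩ hV
    have hC := gi_out hC
    exact gi_in (lres_ker (SES.ofQuot hf) (hV 0 le_rfl) (gi_out hG).1 hC.1)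
      fun i => hV i (Nat.zero_le i)
  | succ m ih =>
    rintro M ⟨G, f, hf, hG, hC⟩ hV
    refine ⟨G, f, hf, hG, ih _ hC fun i hi => ?_⟩
    exact (SES.ofQuot hf).vanC (hV (i + 1) (by omega)) ((gi_out hG).2 _)

theorem gidim_desc' (m k : ℕ) (M : ModuleCat.{u} S) (h : GIdimLE S (m + k) M)
    (hV : ∀ i, m ≤ i → Van i M) : GIdimLE S m M := by
  induction k with
  | zero => exact h
  | succ k ih => exact ih (gidim_desc (m + k) M h fun i hi => hV i (by omega))

theorem gi_equiv {M N : ModuleCat.{u} S} (e : M ≃ₗ[S] N) :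
    IsGorensteinInjective S M → IsGorensteinInjective S N := by
  rintro ⟨I, f, h1, h2, h3, h4, ⟨e'⟩⟩
  exact ⟨I, f, h1, h2, h3, h4, ⟨e.symm.trans e'⟩⟩

theorem gidim_equiv (n : ℕ) {M N : ModuleCat.{u} S} (e : M ≃ₗ[S] N) :
    GIdimLE S n M → GIdimLE S n N := by
  cases n with
  | zero => exact gi_equiv e
  | succ n =>
    rintro ⟨G, f, hf, hG, hC⟩
    refine ⟨G, f.comp e.symm.toLinearMap, hf.comp e.symm.injective, hG, ?_⟩
    have : LinearMap.range (f.comp e.symm.toLinearMap) = LinearMap.range f :=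
      LinearMap.range_comp_of_range_eq_top _ (LinearMap.range_eq_top.mpr e.symm.surjective)
    rw [this]
    exact hC

end General

section Change

variable {R A : Type u} [Ring R] [Ring A] (ι : R →+* A)

/-- Restriction of scalars. -/
def ResM (_ : R →+* A) (N : Type u) : Type u := N

instance (N : Type u) [AddCommGroup N] : AddCommGroup (ResM ι N) := inferInstanceAs (AddCommGroup N)

instance (N : Type u) [AddCommGroup N] [Module A N] : Module R (ResM ι N) := Module.compHom N ι

/-- The identity map from the restriction. -/
def un {N : Type u} [AddCommGroup N] : ResM ι N ≃+ N := AddEquiv.refl N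

theorem un_smul {N : Type u} [AddCommGroup N] [Module A N] (r : R) (z : ResM ι N) :
    un ι (r • z) = ι r • un ι z := rfl

/-- Restriction of scalars on maps. -/
def resMap {N N' : Type u} [AddCommGroup N] [Module A N] [AddCommGroup N'] [Module A N']
    (f : N →ₗ[A] N') : ResM ι N →ₗ[R] ResM ι N' where
  toFun x := (un ι).symm (f (un ι x))
  map_add' x y := f.map_add x y
  map_smul' r x := f.map_smul (ι r) x

/-- Coinduced module: `R`-linear functions `A → X`. -/
def coindSub (X : Type u) [AddCommGroup X] [Module R X] : AddSubgroup (A → X) where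
  carrier := {v | (∀ a b, v (a + b) = v a + v b) ∧ ∀ r a, v (ι r * a) = r • v a}
  add_mem' := by
    rintro v w ⟨h1, h2⟩ ⟨h3, h4⟩
    refine ⟨fun a b => ?_, fun r a => ?_⟩
    · simp only [Pi.add_apply, h1, h3]; abel
    · simp only [Pi.add_apply, h2, h4, smul_add]
  zero_mem' := ⟨fun a b => by simp, fun r a => by simp⟩
  neg_mem' := by
    rintro v ⟨h1, h2⟩
    refine ⟨fun a b => ?_, fun r a => ?_⟩
    · simp only [Pi.neg_apply, h1]; abel
    · simp only [Pi.neg_apply, h2, smul_neg]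

/-- Coinduced module. -/
def CoInd (X : Type u) [AddCommGroup X] [Module R X] : Type u := coindSub ι X

instance (X : Type u) [AddCommGroup X] [Module R X] : AddCommGroup (CoInd ι X) :=
  inferInstanceAs (AddCommGroup (coindSub ι X))

section
variable {ι} {X : Type u} [AddCommGroup X] [Module R X]

/-- Constructor. -/
def CoInd.mk (v : A → X) (h1 : ∀ a b, v (a + b) = v a + v b)
    (h2 : ∀ r a, v (ι r * a) = r • v a) : CoInd ι X := ⟨v, h1, h2⟩

/-- Evaluation. -/
def CoInd.ev (v : CoInd ι X) (a : A) : X := v.1 a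

theorem CoInd.ev_add (v : CoInd ι X) (a b : A) : v.ev (a + b) = v.ev a + v.ev b := v.2.1 a b

theorem CoInd.ev_mul (v : CoInd ι X) (r : R) (a : A) : v.ev (ι r * a) = r • v.ev a := v.2.2 r a

theorem CoInd.add_ev (v w : CoInd ι X) (a : A) : (v + w).ev a = v.ev a + w.ev a := rfl

@[ext] theorem CoInd.ext {v w : CoInd ι X} (h : ∀ a, v.ev a = w.ev a) : v = w :=
  Subtype.ext (funext h)

theorem CoInd.ev_zero (v : CoInd ι X) : v.ev 0 = 0 := by
  have := v.ev_add 0 0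
  simpa using this

theorem CoInd.zero_ev (a : A) : (0 : CoInd ι X).ev a = 0 := rfl

theorem CoInd.ev_sum (v : CoInd ι X) {n : ℕ} (f : Fin n → A) :
    v.ev (∑ i, f i) = ∑ i, v.ev (f i) := by
  let V : A →+ X := ⟨⟨v.ev, v.ev_zero⟩, v.ev_add⟩
  exact map_sum V f _

theorem CoInd.sum_ev {n : ℕ} (f : Fin n → CoInd ι X) (a : A) :
    (∑ i, f i).ev a = ∑ i, (f i).ev a := by
  let V : CoInd ι X →+ X := ⟨⟨fun v => v.ev a, rfl⟩, fun v w => rfl⟩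
  exact map_sum V f _

instance : Module A (CoInd ι X) where
  smul b v := CoInd.mk (fun a => v.ev (a * b)) (fun a c => by simp only [add_mul, v.ev_add])
    (fun r a => by simp only [mul_assoc, v.ev_mul])
  one_smul v := CoInd.ext fun a => by change v.ev (a * 1) = _; rw [mul_one]
  mul_smul b c v := CoInd.ext fun a => by
    change v.ev (a * (b * c)) = v.ev (a * b * c); rw [mul_assoc]
  smul_zero b := rfl
  smul_add b v w := rfl
  add_smul b c v := CoInd.ext fun a => by
    change v.ev (a * (b + c)) = v.ev (a * b) + v.ev (a * c); rw [mul_add, v.ev_add]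
  zero_smul v := CoInd.ext fun a => by
    change v.ev (a * 0) = 0; rw [mul_zero, v.ev_zero]

theorem CoInd.smul_ev (b : A) (v : CoInd ι X) (a : A) : (b • v).ev a = v.ev (a * b) := rfl

end

theorem coind_inj (Q : Type u) [AddCommGroup Q] [Module R Q] (hQ : Module.Injective R Q) :
    Module.Injective A (CoInd ι Q) := by
  constructor
  intro X Y _ _ _ _ f hf g
  let g1 : ResM ι X →ₗ[R] Q :=
    { toFun := fun x => (g (un ι x)).ev 1
      map_add' := fun x y => by
        have : g (un ι x + un ι y) = g (un ι x) + g (un ι y) := g.map_add _ _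
        exact congrArg (fun v => v.ev 1) this
      map_smul' := fun r x => by
        have : g (ι r • un ι x) = ι r • g (un ι x) := g.map_smul (ι r) _
        refine (congrArg (fun v => v.ev 1) this).trans ?_
        rw [CoInd.smul_ev, one_mul, ← mul_one (ι r), CoInd.ev_mul]; rfl }
  obtain ⟨h, hh⟩ := hQ.out (resMap ι f) hf g1
  refine ⟨{ toFun := fun y => CoInd.mk (fun a => h ((un ι).symm (a • y))) ?_ ?_, map_add' := ?_, map_smul' := ?_ }, ?_⟩
  · intro a b
    simp only [add_smul, map_add]
  · intro r a
    simp only [mul_smul]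
    exact h.map_smul r _
  · intro y z
    refine CoInd.ext fun a => ?_
    change h ((un ι).symm (a • (y + z))) = h ((un ι).symm (a • y)) + h ((un ι).symm (a • z))
    rw [smul_add, map_add, map_add]
  · intro b y
    refine CoInd.ext fun a => ?_
    change h ((un ι).symm (a • (b • y))) = h ((un ι).symm ((a * b) • y))
    rw [mul_smul]
  · intro x
    refine CoInd.ext fun a => ?_
    change h ((un ι).symm (a • f x)) = _
    rw [← f.map_smul]
    refine (hh ((un ι).symm (a • x))).trans ?_
    change (g (a • x)).ev 1 = _
    rw [g.map_smul, CoInd.smul_ev, one_mul]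

variable {ι} (τ : A →+ R) {n : ℕ} (x y : Fin n → A)
    (h1 : ∀ (r : R) (a : A), τ (ι r * a) = r * τ a)
    (h2 : ∀ (a : A) (r : R), τ (a * ι r) = τ a * r)
    (h3 : ∀ a : A, ∑ i, x i * ι (τ (y i * a)) = a)
    (h4 : ∀ a : A, ∑ i, ι (τ (a * x i)) * y i = a)

/-- The unit `X → CoInd X`, `x ↦ τ(-) x`. -/
def unitMap (X : Type u) [AddCommGroup X] [Module R X] : X →ₗ[R] ResM ι (CoInd ι X) where
  toFun v := (un ι).symm (CoInd.mk (fun a => τ a • v) (fun a b => by simp only [map_add, add_smul])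
    (fun r a => by simp only [h1, mul_smul]))
  map_add' v w := CoInd.ext (ι := ι) fun a => smul_add _ _ _
  map_smul' r v := CoInd.ext (ι := ι) fun a => by
    change τ a • (r • v) = τ (a * ι r) • v
    rw [h2, mul_smul]

theorem unitMap_ev (X : Type u) [AddCommGroup X] [Module R X] (v : X) (a : A) :
    (un ι (unitMap τ h1 h2 X v)).ev a = τ a • v := rfl

include h3 h4 in
theorem trace_lin {N : Type u} [AddCommGroup N] [Module A N]
    {Y : Type u} [AddCommGroup Y] [Module R Y] (f : Y →ₗ[R] ResM ι N) (v : CoInd ι Y) (b : A) :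
    ∑ i, x i • (un ι (f (v.ev (y i * b)))) = b • ∑ i, x i • (un ι (f (v.ev (y i)))) := by
  have e1 : ∀ i, (un ι (f (v.ev (y i * b)))) =
      ∑ j, ι (τ (y i * b * x j)) • (un ι (f (v.ev (y j)))) := by
    intro i
    conv_lhs => rw [← h4 (y i * b), CoInd.ev_sum]
    rw [map_sum, map_sum]
    refine Finset.sum_congr rfl fun j _ => ?_
    rw [CoInd.ev_mul, map_smul, un_smul]
  simp only [e1, Finset.smul_sum]
  rw [Finset.sum_comm]
  refine Finset.sum_congr rfl fun j _ => ?_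
  conv_rhs => rw [smul_smul, ← h3 (b * x j), Finset.sum_smul]
  refine Finset.sum_congr rfl fun i _ => ?_
  rw [smul_smul, mul_assoc (y i)]

/-- The trace `CoInd Y → N` attached to an `R`-linear map `Y → N`. -/
def coTrace {N : Type u} [AddCommGroup N] [Module A N]
    {Y : Type u} [AddCommGroup Y] [Module R Y] (f : Y →ₗ[R] ResM ι N) : CoInd ι Y →ₗ[A] N where
  toFun v := ∑ i, x i • (un ι (f (v.ev (y i))))
  map_add' v w := by
    rw [← Finset.sum_add_distrib]
    refine Finset.sum_congr rfl fun i _ => ?_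
    rw [← smul_add, CoInd.add_ev, map_add, map_add]
  map_smul' b v := trace_lin τ x y h3 h4 f v b

theorem coTrace_apply {N : Type u} [AddCommGroup N] [Module A N]
    {Y : Type u} [AddCommGroup Y] [Module R Y] (f : Y →ₗ[R] ResM ι N) (v : CoInd ι Y) :
    coTrace τ x y h3 h4 f v = ∑ i, x i • (un ι (f (v.ev (y i)))) := rfl

theorem coTrace_unit {N : Type u} [AddCommGroup N] [Module A N]
    {Y : Type u} [AddCommGroup Y] [Module R Y] (f : Y →ₗ[R] ResM ι N) (z : Y) :
    coTrace τ x y h3 h4 f (un ι (unitMap τ h1 h2 Y z)) = un ι (f z) := by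
  rw [coTrace_apply]
  have : ∀ i, un ι (f ((un ι (unitMap τ h1 h2 Y z)).ev (y i))) =
      ι (τ (y i * 1)) • un ι (f z) := fun i => by
    rw [unitMap_ev, mul_one, map_smul, un_smul]
  simp only [this, smul_smul]
  rw [← Finset.sum_smul, h3, one_smul]

include h1 h2 h3 h4 in
theorem res_inj (E : Type u) [AddCommGroup E] [Module A E] (hE : Module.Injective A E) :
    Module.Injective R (ResM ι E) := by
  constructor
  intro X Y _ _ _ _ i hi f
  let ci : CoInd ι X →ₗ[A] CoInd ι Y :=
    { toFun := fun v => CoInd.mk (fun a => i (v.ev a)) (fun a b => by simp only [v.ev_add, map_add])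
        (fun r a => by simp only [v.ev_mul, map_smul])
      map_add' := fun v w => CoInd.ext fun a => map_add i _ _
      map_smul' := fun b v => rfl }
  have hci : Function.Injective ci := fun v w hvw =>
    CoInd.ext fun a => hi (congrArg (fun z => CoInd.ev z a) hvw)
  obtain ⟨F, hF⟩ := hE.out ci hci (coTrace τ x y h3 h4 f)
  refine ⟨(resMap ι F).comp (unitMap τ h1 h2 Y), fun z => ?_⟩
  refine Eq.trans ?_ (coTrace_unit τ x y h1 h2 h3 h4 f z)
  refine Eq.trans ?_ (hF (un ι (unitMap τ h1 h2 X z)))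
  refine congrArg F (CoInd.ext fun a => ?_)
  exact ((i.map_smul _ _).symm)

include h1 h2 h3 h4 in
theorem res_gi (N : Type u) [AddCommGroup N] [Module A N]
    (h : IsGorensteinInjective A (ModuleCat.of A N)) :
    IsGorensteinInjective R (ModuleCat.of R (ResM ι N)) := by
  obtain ⟨I, f, hI, h0, hex, hl, ⟨e⟩⟩ := h
  refine ⟨fun i => ModuleCat.of R (ResM ι (I i)), fun i => (resMap ι (f i) :),
    fun i => res_inj τ x y h1 h2 h3 h4 (I i) (hI i), ?_, ?_, ?_, ?_⟩
  · exact fun i => LinearMap.ext fun z => LinearMap.congr_fun (h0 i) z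
  · intro i
    ext z
    have : z ∈ LinearMap.range (f (i + 1)) ↔ z ∈ LinearMap.ker (f i) := by rw [hex i]
    exact this
  · intro Q hQ i g hg
    obtain ⟨H, hH⟩ := hl (ModuleCat.of A (CoInd ι Q)) (coind_inj ι Q hQ) i
      (coTrace τ x y h3 h4 (N := I (i + 1)) g) (by
        ext v
        change f i (coTrace τ x y h3 h4 (N := I (i + 1)) g v) = 0
        rw [coTrace_apply, map_sum]
        refine Finset.sum_eq_zero fun j _ => ?_
        rw [map_smul]
        have : f i (un ι (N := I (i + 1)) (g (v.ev (y j)))) = 0 := LinearMap.congr_fun hg _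
        rw [this, smul_zero])
    refine ⟨(resMap ι H :).comp (unitMap τ h1 h2 Q), LinearMap.ext fun z => ?_⟩
    refine Eq.trans ?_ (coTrace_unit τ x y h1 h2 h3 h4 (N := I (i + 1)) g z)
    exact LinearMap.congr_fun hH (un ι (unitMap τ h1 h2 Q z))
  · refine ⟨{
      toFun := fun z => ⟨(e z).1, (e z).2⟩
      map_add' := ?_
      map_smul' := ?_
      invFun := fun z => e.symm ⟨z.1, z.2⟩
      left_inv := ?_
      right_inv := ?_ }⟩
    · intro z w
      exact Subtype.ext (congrArg Subtype.val (e.map_add z w))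
    · intro r z
      exact Subtype.ext (congrArg Subtype.val (e.map_smul (ι r) z))
    · intro z
      exact e.symm_apply_apply z
    · intro z
      exact Subtype.ext (congrArg Subtype.val (e.apply_symm_apply ⟨z.1, z.2⟩))

include h1 h2 h3 h4 in
theorem res_gidim (m : ℕ) : ∀ (N : ModuleCat.{u} A), GIdimLE A m N →
    GIdimLE R m (ModuleCat.of R (ResM ι N)) := by
  induction m with
  | zero => exact fun N h => res_gi τ x y h1 h2 h3 h4 N h
  | succ m ih =>
    rintro N ⟨G, f, hf, hG, hC⟩
    refine ⟨ModuleCat.of R (ResM ι G), (resMap ι f :), hf, res_gi τ x y h1 h2 h3 h4 G hG, ?_⟩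
    refine gidim_equiv m ?_ (ih _ hC)
    let p : ResM ι G →ₗ[R] ResM ι (G ⧸ LinearMap.range f) := (resMap ι (LinearMap.range f).mkQ :)
    have hp : Function.Surjective p := Submodule.mkQ_surjective (LinearMap.range f)
    have hk : LinearMap.range (resMap ι f) = LinearMap.ker p := by
      ext z
      have : z ∈ LinearMap.range f ↔ z ∈ LinearMap.ker (LinearMap.range f).mkQ := by
        rw [Submodule.ker_mkQ]
      exact this
    exact ((Submodule.quotEquivOfEq _ _ hk).trans (p.quotKerEquivOfSurjective hp)).symm

/-- Restriction on `ModuleCat`. -/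
abbrev Rs (ι : R →+* A) (N : ModuleCat.{u} A) : ModuleCat.{u} R := ModuleCat.of R (ResM ι N)

theorem SES.res {M G C : ModuleCat.{u} A} {f : M →ₗ[A] G} {p : G →ₗ[A] C} (h : SES f p) :
    SES (M := Rs ι M) (G := Rs ι G) (C := Rs ι C) (resMap ι f :) (resMap ι p :) := by
  refine ⟨h.inj, h.surj, ?_⟩
  ext z
  have : z ∈ LinearMap.range f ↔ z ∈ LinearMap.ker p := by rw [h.ex]
  exact this

include h1 h2 h3 h4 in
theorem res_lifts {G C : ModuleCat.{u} A} {p : G →ₗ[A] C}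
    (h : Lifts (M := Rs ι G) (N := Rs ι C) (resMap ι p :)) : Lifts p := by
  intro Q hQ g
  obtain ⟨t, ht⟩ := h (Rs ι Q) (res_inj τ x y h1 h2 h3 h4 Q hQ) (resMap ι g :)
  have ht : ∀ z : ResM ι Q, p (un ι (N := G) (t z)) = g (un ι z) := LinearMap.congr_fun ht
  -- the canonical embedding of `Q` in the coinduced module
  let c : Q →ₗ[A] CoInd ι (ResM ι Q) :=
    { toFun := fun q => CoInd.mk (fun a => (un ι).symm (a • q)) (fun a b => add_smul a b q)
        (fun r a => mul_smul (ι r) a q)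
      map_add' := fun q q' => CoInd.ext fun a => smul_add a q q'
      map_smul' := fun b q => CoInd.ext fun a => smul_smul a b q }
  have hcev : ∀ q a, (c q).ev a = (un ι).symm (a • q) := fun q a => rfl
  have hc : Function.Injective c := fun q q' hqq => by
    have h1 := congrArg (fun v => CoInd.ev v 1) hqq
    simp only [hcev] at h1
    rw [one_smul, one_smul] at h1
    exact (un ι).symm.injective h1
  obtain ⟨s, hs⟩ := hQ.out c hc LinearMap.id
  let φ : ResM ι Q →ₗ[R] ResM ι Q := (resMap ι s :).comp (unitMap τ h1 h2 (ResM ι Q))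
  refine ⟨(coTrace τ x y h3 h4 (N := G) (t.comp φ)).comp c, LinearMap.ext fun q => ?_⟩
  change p (coTrace τ x y h3 h4 (N := G) (t.comp φ) (c q)) = g q
  rw [coTrace_apply, map_sum]
  have e1 : ∀ i, p (x i • un ι (N := G) ((t.comp φ) ((c q).ev (y i)))) =
      g (x i • s (un ι (unitMap τ h1 h2 (ResM ι Q) ((c q).ev (y i))))) := by
    intro i
    rw [map_smul, map_smul]
    exact congrArg _ (ht _)
  rw [Finset.sum_congr rfl fun i _ => e1 i, ← map_sum]
  refine congrArg g ?_
  have e2 : c q = ∑ i, x i • un ι (unitMap τ h1 h2 (ResM ι Q) ((c q).ev (y i))) := by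
    refine CoInd.ext fun a => ?_
    rw [CoInd.sum_ev]
    conv_lhs => rw [← h4 a, CoInd.ev_sum]
    refine Finset.sum_congr rfl fun i _ => ?_
    rw [CoInd.ev_mul, CoInd.smul_ev]
    rfl
  have e3 := hs q
  rw [e2, map_sum] at e3
  refine Eq.trans (Finset.sum_congr rfl fun i _ => ?_) e3
  exact (s.map_smul _ _).symm

include h1 h2 h3 h4 in
theorem res_van (i : ℕ) : ∀ M : ModuleCat.{u} A, Van i (Rs ι M) → Van i M := by
  induction i with
  | zero =>
    intro M hM
    obtain ⟨E, C, f, p, hE, hs⟩ := exists_inj M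
    exact hs.van0' (res_lifts τ x y h1 h2 h3 h4 ((hs.res (ι := ι)).van0 hM)) (van_inj hE 0)
  | succ i ih =>
    intro M hM
    obtain ⟨E, C, f, p, hE, hs⟩ := exists_inj M
    have hE' : Module.Injective R (Rs ι E) := res_inj τ x y h1 h2 h3 h4 E hE
    exact hs.vanS (ih C ((hs.res (ι := ι)).vanC hM (van_inj hE' i))) (van_inj hE _)

end Change

end GorAux

section Statement

variable {R A : Type u} [Ring R] [Ring A]

theorem stmt6 (ι : R →+* A) (hF : IsFrobeniusExtension ι)
    (M : Type u) [AddCommGroup M] [Module A M]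
    (h : GIdim A (ModuleCat.of A M) ≠ ⊤) :
    GIdim A (ModuleCat.of A M) = GIdim R (@ModuleCat.of R _ M _ (Module.compHom M ι)) := by
  obtain ⟨-, τ, n, x, y, h1, h2, h3, h4⟩ := hF
  change _ = GIdim R (ModuleCat.of R (GorAux.ResM ι M))
  apply le_antisymm
  · refine le_sInf ?_
    rintro _ ⟨m, rfl, hm⟩
    have hne : ∃ n, GIdimLE A n (ModuleCat.of A M) := by
      by_contra hcon
      apply h
      rw [GIdim, sInf_eq_top]
      rintro _ ⟨k, rfl, hk⟩
      exact absurd ⟨k, hk⟩ hcon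
    obtain ⟨k, hk⟩ := hne
    rcases le_total k m with hkm | hkm
    · have h5 : GIdim A (ModuleCat.of A M) ≤ (k : ℕ∞) := sInf_le ⟨k, rfl, hk⟩
      exact h5.trans (by exact_mod_cast hkm)
    · obtain ⟨d, rfl⟩ := Nat.exists_eq_add_of_le hkm
      refine sInf_le ⟨m, rfl, GorAux.gidim_desc' m d _ hk fun i hi => ?_⟩
      exact GorAux.res_van τ x y h1 h2 h3 h4 i _ (GorAux.gidim_van m _ hm i hi)
  · refine le_sInf ?_
    rintro _ ⟨m, rfl, hm⟩
    exact sInf_le ⟨m, rfl, GorAux.res_gidim τ x y h1 h2 h3 h4 m _ hm⟩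

end Statement
end

section
/- Let R ⊂ A be a split Frobenius extension of rings. Then A is Gorenstein regular if and only if R is Gorenstein regular; that is, every projective left A-module has finite injective dimension and every injective left A-module has finite projective dimension if and only if the same two conditions hold over R. -/
universe u

section Frobenius

variable {R A : Type u} [Ring R] [Ring A]

/-- A ring extension `ι : R →+* A` is split if `R` is a direct summand of `A` as an
`R`-`R`-bimodule, i.e. there is an `R`-`R`-bimodule homomorphism `π : A → R` with
`π ∘ ι = id`. -/
def IsSplitExtension (ι : R →+* A) : Prop :=
  ∃ π : A →+ R,
    (∀ (r : R) (a : A), π (ι r * a) = r * π a) ∧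
    (∀ (a : A) (r : R), π (a * ι r) = π a * r) ∧
    (∀ r : R, π (ι r) = r)

end Frobenius

/-- `pdimLE R n M` means that `M` admits a projective resolution of length `n`. -/
def pdimLE (R : Type u) [Ring R] : ℕ → ModuleCat.{u} R → Prop
  | 0, M => Module.Projective R M
  | n + 1, M => ∃ (G : ModuleCat.{u} R) (f : G →ₗ[R] M),
      Function.Surjective f ∧ Module.Projective R G ∧
      pdimLE R n (ModuleCat.of R ↥(LinearMap.ker f))

/-- The projective dimension of a left `R`-module, in `ℕ∞`. -/
noncomputable def pdim (R : Type u) [Ring R] (M : ModuleCat.{u} R) : ℕ∞ :=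
  sInf {k : ℕ∞ | ∃ n : ℕ, k = (n : ℕ∞) ∧ pdimLE R n M}

/-- `idimLE R n M` means that `M` admits an injective coresolution of length `n`. -/
def idimLE (R : Type u) [Ring R] : ℕ → ModuleCat.{u} R → Prop
  | 0, M => Module.Injective R M
  | n + 1, M => ∃ (G : ModuleCat.{u} R) (f : M →ₗ[R] G),
      Function.Injective f ∧ Module.Injective R G ∧
      idimLE R n (ModuleCat.of R (↥G ⧸ LinearMap.range f))

/-- The injective dimension of a left `R`-module, in `ℕ∞`. -/
noncomputable def idim (R : Type u) [Ring R] (M : ModuleCat.{u} R) : ℕ∞ :=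
  sInf {k : ℕ∞ | ∃ n : ℕ, k = (n : ℕ∞) ∧ idimLE R n M}

section Helpers

open CategoryTheory CategoryTheory.Limits

theorem pdimLE_iff (R : Type u) [Ring R] (n : ℕ) (M : ModuleCat.{u} R) :
    pdimLE R n M ↔ HasProjectiveDimensionLE M n := by
  induction n generalizing M with
  | zero =>
    rw [← projective_iff_hasProjectiveDimensionLE_zero, pdimLE]
    exact IsProjective.iff_projective (R := R) M
  | succ n ih =>
    rw [pdimLE]
    constructor
    · rintro ⟨G, f, hf, hG, h⟩
      have hG' : Projective G := (IsProjective.iff_projective (R := R) G).1 hG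
      exact ((LinearMap.shortExact_shortComplexKer hf).hasProjectiveDimensionLT_X₃_iff n hG').2
        ((ih _).1 h)
    · intro h
      let p := (EnoughProjectives.presentation M).some
      have hG : Projective p.p := p.projective
      have hf : Function.Surjective p.f.hom := (ModuleCat.epi_iff_surjective p.f).1 p.epi
      exact ⟨p.p, p.f.hom, hf, (IsProjective.iff_projective (R := R) p.p).2 hG, (ih _).2
        (((LinearMap.shortExact_shortComplexKer hf).hasProjectiveDimensionLT_X₃_iff n hG).1 h)⟩

theorem shortExact_quot {R : Type u} [Ring R] {M G : ModuleCat.{u} R} (f : M →ₗ[R] G)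
    (hf : Function.Injective f) :
    (ModuleCat.shortComplexOfCompEqZero _ _
      f.exact_map_mkQ_range.linearMap_comp_eq_zero).ShortExact :=
  ModuleCat.shortComplex_shortExact _ f.exact_map_mkQ_range hf (Submodule.mkQ_surjective _)

theorem idimLE_iff (R : Type u) [Ring R] (n : ℕ) (M : ModuleCat.{u} R) :
    idimLE R n M ↔ HasInjectiveDimensionLE M n := by
  induction n generalizing M with
  | zero =>
    rw [HasInjectiveDimensionLE, zero_add, ← injective_iff_hasInjectiveDimensionLT_one, idimLE]
    exact Module.injective_iff_injective_object R M
  | succ n ih =>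
    rw [idimLE]
    constructor
    · rintro ⟨G, f, hf, hG, h⟩
      have hG' : Injective G := (Module.injective_iff_injective_object R G).1 hG
      exact ((shortExact_quot f hf).hasInjectiveDimensionLT_X₃_iff n hG').1 ((ih _).1 h)
    · intro h
      let p := (EnoughInjectives.presentation M).some
      have hG : Injective p.J := p.injective
      have hf : Function.Injective p.f.hom := (ModuleCat.mono_iff_injective p.f).1 p.mono
      exact ⟨p.J, p.f.hom, hf, (Module.injective_iff_injective_object R p.J).2 hG, (ih _).2
        (((shortExact_quot p.f.hom hf).hasInjectiveDimensionLT_X₃_iff n hG).2 h)⟩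

theorem pdim_ne_top_iff (R : Type u) [Ring R] (M : ModuleCat.{u} R) :
    pdim R M ≠ ⊤ ↔ ∃ n, HasProjectiveDimensionLE M n := by
  simp only [pdim, ne_eq, sInf_eq_top, Set.mem_ofPred_eq, ← pdimLE_iff]
  push Not
  constructor
  · rintro ⟨_, ⟨n, rfl, h⟩, -⟩
    exact ⟨n, h⟩
  · rintro ⟨n, h⟩
    exact ⟨n, ⟨n, rfl, h⟩, ENat.natCast_ne_top n⟩

theorem idim_ne_top_iff (R : Type u) [Ring R] (M : ModuleCat.{u} R) :
    idim R M ≠ ⊤ ↔ ∃ n, HasInjectiveDimensionLE M n := by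
  simp only [idim, ne_eq, sInf_eq_top, Set.mem_ofPred_eq, ← idimLE_iff]
  push Not
  constructor
  · rintro ⟨_, ⟨n, rfl, h⟩, -⟩
    exact ⟨n, h⟩
  · rintro ⟨n, h⟩
    exact ⟨n, ⟨n, rfl, h⟩, ENat.natCast_ne_top n⟩

theorem functor_pdim {R S : Type u} [Ring R] [Ring S] (F : ModuleCat.{u} R ⥤ ModuleCat.{u} S)
    [F.Additive] [PreservesFiniteLimits F] [PreservesFiniteColimits F]
    (hF : ∀ P, Projective P → Projective (F.obj P)) (n : ℕ) (M : ModuleCat.{u} R)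
    (hM : HasProjectiveDimensionLE M n) : HasProjectiveDimensionLE (F.obj M) n := by
  induction n generalizing M with
  | zero =>
    rw [← projective_iff_hasProjectiveDimensionLE_zero] at hM ⊢
    exact hF M hM
  | succ n ih =>
    let p := (EnoughProjectives.presentation M).some
    have hG : Projective p.p := p.projective
    have hf : Function.Surjective p.f.hom := (ModuleCat.epi_iff_surjective p.f).1 p.epi
    have hS := LinearMap.shortExact_shortComplexKer hf
    exact ((hS.map_of_exact F).hasProjectiveDimensionLT_X₃_iff n (hF _ hG)).2
      (ih _ ((hS.hasProjectiveDimensionLT_X₃_iff n hG).1 hM))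

theorem functor_idim {R S : Type u} [Ring R] [Ring S] (F : ModuleCat.{u} R ⥤ ModuleCat.{u} S)
    [F.Additive] [PreservesFiniteLimits F] [PreservesFiniteColimits F]
    (hF : ∀ P, Injective P → Injective (F.obj P)) (n : ℕ) (M : ModuleCat.{u} R)
    (hM : HasInjectiveDimensionLE M n) : HasInjectiveDimensionLE (F.obj M) n := by
  induction n generalizing M with
  | zero =>
    rw [HasInjectiveDimensionLE, zero_add, ← injective_iff_hasInjectiveDimensionLT_one] at hM ⊢
    exact hF M hM
  | succ n ih =>
    let p := (EnoughInjectives.presentation M).some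
    have hG : Injective p.J := p.injective
    have hf : Function.Injective p.f.hom := (ModuleCat.mono_iff_injective p.f).1 p.mono
    have hS := shortExact_quot p.f.hom hf
    exact ((hS.map_of_exact F).hasInjectiveDimensionLT_X₃_iff n (hF _ hG)).1
      (ih _ ((hS.hasInjectiveDimensionLT_X₃_iff n hG).2 hM))

section Maps

variable {R A : Type u} [Ring R] [Ring A] (ι : R →+* A)

/-- The map `N → Hom_R(A, N)`, `m ↦ (b ↦ t b • m)` for a bimodule map `t : A → R`. -/
noncomputable def bimodUnit (t : A →+ R) (h1 : ∀ (r : R) (a : A), t (ι r * a) = r * t a)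
    (h2 : ∀ (a : A) (r : R), t (a * ι r) = t a * r) (N : ModuleCat.{u} R) :
    N ⟶ (ModuleCat.restrictScalars ι).obj ((ModuleCat.coextendScalars ι).obj N) :=
  ModuleCat.ofHom (Y := (ModuleCat.restrictScalars ι).obj ((ModuleCat.coextendScalars ι).obj N))
  { toFun := fun m => (ModuleCat.CoextendScalars.equiv ι N).symm
      { toFun := fun b : A => t b • m
        map_add' := fun b c : A => (congrArg (· • m) (t.map_add b c)).trans (add_smul _ _ _)
        map_smul' := fun r (b : A) => (congrArg (· • m) (h1 r b)).trans (mul_smul _ _ _) }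
    map_add' := fun m m' => (ModuleCat.CoextendScalars.equiv ι N).injective <|
      LinearMap.ext fun b : A => smul_add (t b) m m'
    map_smul' := fun r m => (ModuleCat.CoextendScalars.equiv ι N).injective <|
      LinearMap.ext fun b : A =>
        ((mul_smul (t b) r m).symm.trans (congrArg (· • m) (h2 b r).symm)) }

theorem bimodUnit_apply (t : A →+ R) (h1 : ∀ (r : R) (a : A), t (ι r * a) = r * t a)
    (h2 : ∀ (a : A) (r : R), t (a * ι r) = t a * r) (N : ModuleCat.{u} R) (m : N) (b : A) :
    ModuleCat.CoextendScalars.equiv ι N ((bimodUnit ι t h1 h2 N).hom m) b = t b • m := rfl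

/-- Evaluation at `1`. -/
noncomputable def evalOne (N : ModuleCat.{u} R) :
    (ModuleCat.restrictScalars ι).obj ((ModuleCat.coextendScalars ι).obj N) ⟶ N :=
  (ModuleCat.restrictCoextendScalarsAdj.{u} ι).counit.app N

theorem evalOne_apply (N : ModuleCat.{u} R) (g : (ModuleCat.coextendScalars ι).obj N) :
    (evalOne ι N).hom g = ModuleCat.CoextendScalars.equiv ι N g (1 : A) := rfl

theorem coext_lin (N : ModuleCat.{u} R) (g : (ModuleCat.coextendScalars ι).obj N)
    (r : R) (b : A) : ModuleCat.CoextendScalars.equiv ι N g (ι r * b : A) =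
      r • ModuleCat.CoextendScalars.equiv ι N g b :=
  (ModuleCat.CoextendScalars.equiv ι N g).map_smul r b

variable {ι} (τ : A →+ R) (n : ℕ) (x y : Fin n → A)

theorem coext_expand (h4 : ∀ a : A, ∑ i, ι (τ (a * x i)) * y i = a)
    (N : ModuleCat.{u} R) (g : (ModuleCat.coextendScalars ι).obj N) (b : A) :
    ModuleCat.CoextendScalars.equiv ι N g b =
      ∑ i, τ (b * x i) • ModuleCat.CoextendScalars.equiv ι N g (y i) := by
  conv_lhs => rw [← h4 b]
  refine (map_sum (ModuleCat.CoextendScalars.equiv ι N g)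
    (fun i => (ι (τ (b * x i)) * y i : A)) Finset.univ).trans ?_
  exact Finset.sum_congr rfl fun i _ => coext_lin ι N g _ _

theorem frob_sum_aux (h3 : ∀ a : A, ∑ i, x i * ι (τ (y i * a)) = a)
    {X : Type u} [AddCommGroup X] [Module A X] (s : A) (v w : Fin n → X)
    (hw : ∀ i, w i = ∑ j, ι (τ (y i * s * x j)) • v j) :
    ∑ i, x i • w i = s • ∑ i, x i • v i := by
  simp only [hw, Finset.smul_sum, smul_smul]
  rw [Finset.sum_comm]
  refine Finset.sum_congr rfl fun j _ => ?_
  rw [← Finset.sum_smul]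
  congr 1
  simpa only [mul_assoc] using h3 (s * x j)

theorem frob_sum_one (h3 : ∀ a : A, ∑ i, x i * ι (τ (y i * a)) = a)
    {X : Type u} [AddCommGroup X] [Module A X] (m : X) :
    ∑ i, x i • (ι (τ (y i)) • m) = m := by
  simp only [smul_smul]
  rw [← Finset.sum_smul]
  have := h3 1
  simp only [mul_one] at this
  rw [this, one_smul]

/-- The map `Hom_R(A, X) → X`, `g ↦ ∑ x i • g (y i)`. -/
noncomputable def frobCounit
    (h3 : ∀ a : A, ∑ i, x i * ι (τ (y i * a)) = a)
    (h4 : ∀ a : A, ∑ i, ι (τ (a * x i)) * y i = a) (X : ModuleCat.{u} A) :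
    (ModuleCat.coextendScalars ι).obj ((ModuleCat.restrictScalars ι).obj X) ⟶ X :=
  ModuleCat.ofHom
  { toFun := fun g => ∑ i, x i •
      (show X from ModuleCat.CoextendScalars.equiv ι ((ModuleCat.restrictScalars ι).obj X) g (y i))
    map_add' := fun g g' => by
      rw [← Finset.sum_add_distrib]
      exact Finset.sum_congr rfl fun i _ => smul_add (x i) (_ : X) _
    map_smul' := fun s g => frob_sum_aux τ n x y h3 s
      (fun j => (show X from ModuleCat.CoextendScalars.equiv ι
          ((ModuleCat.restrictScalars ι).obj X) g (y j))) _
      fun i => coext_expand τ n x y h4 _ g (y i * s) }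

/-- Coextension is left adjoint to restriction along a Frobenius extension. -/
noncomputable def frobAdj
    (h1 : ∀ (r : R) (a : A), τ (ι r * a) = r * τ a)
    (h2 : ∀ (a : A) (r : R), τ (a * ι r) = τ a * r)
    (h3 : ∀ a : A, ∑ i, x i * ι (τ (y i * a)) = a)
    (h4 : ∀ a : A, ∑ i, ι (τ (a * x i)) * y i = a) :
    ModuleCat.coextendScalars.{u, u, u} ι ⊣ ModuleCat.restrictScalars.{u} ι :=
  Adjunction.mkOfUnitCounit
  { unit :=
      { app := fun N => bimodUnit ι τ h1 h2 N
        naturality := fun N N' f => ModuleCat.hom_ext <| LinearMap.ext fun m =>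
          (ModuleCat.CoextendScalars.equiv ι N').injective <| LinearMap.ext fun b : A =>
            (f.hom.map_smul (τ b) m).symm }
    counit :=
      { app := fun X => frobCounit τ n x y h3 h4 X
        naturality := fun X X' f => ModuleCat.hom_ext <| LinearMap.ext fun g => by
          refine Eq.trans ?_ (map_sum f.hom (fun i => x i • (show X from
            ModuleCat.CoextendScalars.equiv ι ((ModuleCat.restrictScalars ι).obj X) g (y i)))
            Finset.univ).symm
          have aux : ∀ v : Fin n → X,
              ∑ i, x i • f.hom (v i) = ∑ i, f.hom (x i • v i) := fun v =>
            Finset.sum_congr rfl fun i _ => (f.hom.map_smul (x i) _).symm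
          exact aux _ }
    left_triangle := by
      ext N : 2
      refine ModuleCat.hom_ext <| LinearMap.ext fun g =>
          (ModuleCat.CoextendScalars.equiv ι N).injective <| LinearMap.ext fun b : A => ?_
      refine Eq.trans ?_ (coext_expand τ n x y h4 N g b).symm
      refine (congrArg (fun l => l b) (map_sum (ModuleCat.CoextendScalars.equiv ι N)
        (fun i => x i • (show (ModuleCat.coextendScalars ι).obj N from
          (bimodUnit ι τ h1 h2 N).hom (ModuleCat.CoextendScalars.equiv ι N g (y i))))
          Finset.univ)).trans ?_
      exact LinearMap.sum_apply _ _ _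
    right_triangle := by
      ext X : 2
      refine ModuleCat.hom_ext <| LinearMap.ext fun m => ?_
      exact frob_sum_one τ n x y h3 (X := X) m }

/-- Splitness makes every module a retract of the restriction of its coextension. -/
noncomputable def splitRetract (π : A →+ R) (h1 : ∀ (r : R) (a : A), π (ι r * a) = r * π a)
    (h2 : ∀ (a : A) (r : R), π (a * ι r) = π a * r) (h3 : ∀ r : R, π (ι r) = r)
    (N : ModuleCat.{u} R) :
    Retract N ((ModuleCat.restrictScalars ι).obj ((ModuleCat.coextendScalars ι).obj N)) where
  i := bimodUnit ι π h1 h2 N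
  r := evalOne ι N
  retract := ModuleCat.hom_ext <| LinearMap.ext fun m => by
    change π 1 • m = m
    rw [← ι.map_one, h3, one_smul]

end Maps

end Helpers

section Statement

variable {R A : Type u} [Ring R] [Ring A]

open CategoryTheory CategoryTheory.Limits in
theorem stmt9_aux (ι : R →+* A) (hF : IsFrobeniusExtension ι) (hS : IsSplitExtension ι) :
    ((∀ M : ModuleCat.{u} A, Module.Projective A M → idim A M ≠ ⊤) ∧
      (∀ M : ModuleCat.{u} A, Module.Injective A M → pdim A M ≠ ⊤)) ↔
    ((∀ M : ModuleCat.{u} R, Module.Projective R M → idim R M ≠ ⊤) ∧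
      (∀ M : ModuleCat.{u} R, Module.Injective R M → pdim R M ≠ ⊤)) := by
  obtain ⟨-, τ, n, x, y, h1, h2, h3, h4⟩ := hF
  obtain ⟨π, p1, p2, p3⟩ := hS
  let adj := frobAdj τ n x y h1 h2 h3 h4
  let adj' := ModuleCat.restrictCoextendScalarsAdj.{u} ι
  let Res := ModuleCat.restrictScalars.{u} ι
  let Co := ModuleCat.coextendScalars.{u, u, u} ι
  have : PreservesLimitsOfSize.{u, u} Res := adj.rightAdjoint_preservesLimits
  have : PreservesColimitsOfSize.{u, u} Res := adj'.leftAdjoint_preservesColimits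
  have : PreservesLimitsOfSize.{u, u} Co := adj'.rightAdjoint_preservesLimits
  have : PreservesColimitsOfSize.{u, u} Co := adj.leftAdjoint_preservesColimits
  have : PreservesFiniteLimits Res := PreservesLimits.preservesFiniteLimits Res
  have : PreservesFiniteLimits Co := PreservesLimits.preservesFiniteLimits Co
  have : PreservesFiniteColimits Res := PreservesColimits.preservesFiniteColimits Res
  have : PreservesFiniteColimits Co := PreservesColimits.preservesFiniteColimits Co
  have : Res.Additive := inferInstanceAs (ModuleCat.restrictScalars.{u} ι).Additive
  have : Co.Additive := adj'.right_adjoint_additive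
  have : Res.Faithful := inferInstanceAs (ModuleCat.restrictScalars.{u} ι).Faithful
  have ResP : ∀ P, Projective P → Projective (Res.obj P) := fun P => adj'.map_projective P
  have ResI : ∀ P, Injective P → Injective (Res.obj P) := fun P => adj.map_injective P
  have CoP : ∀ P, Projective P → Projective (Co.obj P) := fun P => adj.map_projective P
  have CoI : ∀ P, Injective P → Injective (Co.obj P) := fun P => adj'.map_injective P
  simp only [pdim_ne_top_iff, idim_ne_top_iff]
  have eP : ∀ {S : Type u} [Ring S] (M : ModuleCat.{u} S), Module.Projective S M ↔ Projective M :=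
    fun M => IsProjective.iff_projective M
  have eI : ∀ {S : Type u} [Ring S] (M : ModuleCat.{u} S), Module.Injective S M ↔ Injective M :=
    fun {S} _ M => Module.injective_iff_injective_object S M
  simp only [eP, eI]
  constructor
  · rintro ⟨H1, H2⟩
    refine ⟨fun M hM => ?_, fun M hM => ?_⟩
    · obtain ⟨k, hk⟩ := H1 _ (CoP M hM)
      have := functor_idim Res ResI k _ hk
      exact ⟨k, (splitRetract π p1 p2 p3 M).hasInjectiveDimensionLT _⟩
    · obtain ⟨k, hk⟩ := H2 _ (CoI M hM)
      have := functor_pdim Res ResP k _ hk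
      exact ⟨k, (splitRetract π p1 p2 p3 M).hasProjectiveDimensionLT _⟩
  · rintro ⟨H1, H2⟩
    refine ⟨fun M hM => ?_, fun M hM => ?_⟩
    · obtain ⟨k, hk⟩ := H1 _ (ResP M hM)
      have := functor_idim Co CoI k _ hk
      have hepi : Epi (adj.counit.app M) := adj.counit_epi_of_R_faithful M
      have r : Retract M (Co.obj (Res.obj M)) :=
        ⟨Projective.factorThru (𝟙 M) (adj.counit.app M), adj.counit.app M,
          Projective.factorThru_comp _ _⟩
      exact ⟨k, r.hasInjectiveDimensionLT _⟩
    · obtain ⟨k, hk⟩ := H2 _ (ResI M hM)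
      have := functor_pdim Co CoP k _ hk
      have hmono : Mono (adj'.unit.app M) := adj'.unit_mono_of_L_faithful M
      have r : Retract M (Co.obj (Res.obj M)) :=
        ⟨adj'.unit.app M, Injective.factorThru (𝟙 M) (adj'.unit.app M),
          Injective.comp_factorThru _ _⟩
      exact ⟨k, r.hasProjectiveDimensionLT _⟩

theorem stmt9 (ι : R →+* A) (hF : IsFrobeniusExtension ι) (hS : IsSplitExtension ι) :
    ((∀ M : ModuleCat.{u} A, Module.Projective A M → idim A M ≠ ⊤) ∧
      (∀ M : ModuleCat.{u} A, Module.Injective A M → pdim A M ≠ ⊤)) ↔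
    ((∀ M : ModuleCat.{u} R, Module.Projective R M → idim R M ≠ ⊤) ∧
      (∀ M : ModuleCat.{u} R, Module.Injective R M → pdim R M ≠ ⊤)) := by
  exact stmt9_aux ι hF hS

end Statement
end

section
/- Let R ⊂ A be a split Frobenius extension of rings such that either A or R is Gorenstein regular. Then spli(A) = silp(A) = fin.dim(A) = spli(R) = silp(R) = fin.dim(R). -/
universe u

/-- `spli Λ`: the supremum of the projective dimensions of injective left `Λ`-modules. -/
noncomputable def spli (Λ : Type u) [Ring Λ] : ℕ∞ :=
  ⨆ (M : ModuleCat.{u} Λ) (_ : Module.Injective Λ M), pdim Λ M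

/-- `silp Λ`: the supremum of the injective dimensions of projective left `Λ`-modules. -/
noncomputable def silp (Λ : Type u) [Ring Λ] : ℕ∞ :=
  ⨆ (M : ModuleCat.{u} Λ) (_ : Module.Projective Λ M), idim Λ M

/-- `findim Λ`: the left finitistic dimension, the supremum of the projective dimensions of
those left `Λ`-modules having finite projective dimension. -/
noncomputable def findim (Λ : Type u) [Ring Λ] : ℕ∞ :=
  ⨆ (M : ModuleCat.{u} Λ) (_ : pdim Λ M ≠ ⊤), pdim Λ M

/-- A ring is (left) Gorenstein regular if both `spli` and `silp` are finite. -/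
def IsGorensteinRegular (Λ : Type u) [Ring Λ] : Prop :=
  spli Λ ≠ ⊤ ∧ silp Λ ≠ ⊤

universe v₁ u₁ v₂ u₂
open CategoryTheory Limits Abelian

namespace SplitFrob

section Cat
variable {C : Type u₁} [Category.{v₁} C] [Abelian C] {D : Type u₂} [Category.{v₂} D] [Abelian D]

lemma map_projDim [EnoughProjectives C] (F : C ⥤ D) [F.Additive] [PreservesFiniteLimits F]
    [PreservesFiniteColimits F] (hF : ∀ P : C, Projective P → Projective (F.obj P))
    (n : ℕ) (X : C) (h : HasProjectiveDimensionLT X (n + 1)) :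
    HasProjectiveDimensionLT (F.obj X) (n + 1) := by
  induction n generalizing X with
  | zero =>
    have := hF X (projective_iff_hasProjectiveDimensionLT_one.2 h)
    exact projective_iff_hasProjectiveDimensionLT_one.1 this
  | succ n ih =>
    obtain ⟨p⟩ := EnoughProjectives.presentation X
    have hS : (ShortComplex.mk _ _ (kernel.condition p.f)).ShortExact :=
      { exact := ShortComplex.exact_kernel p.f }
    have h1 := ih _ ((hS.hasProjectiveDimensionLT_X₃_iff n p.projective).1 h)
    exact ((hS.map_of_exact F).hasProjectiveDimensionLT_X₃_iff n (hF _ p.projective)).2 h1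

lemma map_injDim [EnoughInjectives C] (F : C ⥤ D) [F.Additive] [PreservesFiniteLimits F]
    [PreservesFiniteColimits F] (hF : ∀ P : C, Injective P → Injective (F.obj P))
    (n : ℕ) (X : C) (h : HasInjectiveDimensionLT X (n + 1)) :
    HasInjectiveDimensionLT (F.obj X) (n + 1) := by
  induction n generalizing X with
  | zero =>
    have := hF X (injective_iff_hasInjectiveDimensionLT_one.2 h)
    exact injective_iff_hasInjectiveDimensionLT_one.1 this
  | succ n ih =>
    obtain ⟨p⟩ := EnoughInjectives.presentation X
    have hS : (ShortComplex.mk _ _ (cokernel.condition p.f)).ShortExact :=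
      { exact := ShortComplex.exact_cokernel p.f }
    have h1 := ih _ ((hS.hasInjectiveDimensionLT_X₃_iff n p.injective).2 h)
    exact ((hS.map_of_exact F).hasInjectiveDimensionLT_X₃_iff n (hF _ p.injective)).1 h1

lemma projDim_step [EnoughProjectives C] (n : ℕ)
    (hP : ∀ P : C, Projective P → HasInjectiveDimensionLT P n)
    (k : ℕ) (hk : n ≤ k) (M : C) (h : HasProjectiveDimensionLT M (k + 1)) :
    HasProjectiveDimensionLT M k := by
  let := HasExt.standard C
  refine HasProjectiveDimensionLT.mk fun i hi Y e => ?_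
  obtain ⟨p⟩ := EnoughProjectives.presentation Y
  have hS : (ShortComplex.mk _ _ (kernel.condition p.f)).ShortExact :=
    { exact := ShortComplex.exact_kernel p.f }
  obtain ⟨x, rfl⟩ := Ext.covariant_sequence_exact₃ M hS e rfl
    (Ext.eq_zero_of_hasProjectiveDimensionLT _ (k + 1) (by lia))
  have := hP _ p.projective
  rw [Ext.eq_zero_of_hasInjectiveDimensionLT x n (by lia), Ext.zero_comp]

lemma injDim_step [EnoughInjectives C] (n : ℕ)
    (hP : ∀ P : C, Injective P → HasProjectiveDimensionLT P n)
    (k : ℕ) (hk : n ≤ k) (M : C) (h : HasInjectiveDimensionLT M (k + 1)) :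
    HasInjectiveDimensionLT M k := by
  let := HasExt.standard C
  refine HasInjectiveDimensionLT.mk fun i hi Y e => ?_
  obtain ⟨p⟩ := EnoughInjectives.presentation Y
  have hS : (ShortComplex.mk _ _ (cokernel.condition p.f)).ShortExact :=
    { exact := ShortComplex.exact_cokernel p.f }
  obtain ⟨x, rfl⟩ := Ext.contravariant_sequence_exact₁ hS M e rfl
    (Ext.eq_zero_of_hasInjectiveDimensionLT _ (k + 1) (by lia))
  have := hP _ p.injective
  rw [Ext.eq_zero_of_hasProjectiveDimensionLT x n (by lia), Ext.comp_zero]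

lemma projDim_of_finite [EnoughProjectives C] (n : ℕ)
    (hP : ∀ P : C, Projective P → HasInjectiveDimensionLT P n)
    (k : ℕ) (M : C) (h : HasProjectiveDimensionLT M (n + k)) :
    HasProjectiveDimensionLT M n := by
  induction k with
  | zero => exact h
  | succ k ih => exact ih (projDim_step n hP _ (by lia) M h)

lemma injDim_of_finite [EnoughInjectives C] (n : ℕ)
    (hP : ∀ P : C, Injective P → HasProjectiveDimensionLT P n)
    (k : ℕ) (M : C) (h : HasInjectiveDimensionLT M (n + k)) :
    HasInjectiveDimensionLT M n := by
  induction k with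
  | zero => exact h
  | succ k ih => exact ih (injDim_step n hP _ (by lia) M h)

/-- Ambidextrous adjunction `G ⊣ F ⊣ G`, `G` faithful, with each `X : C` a retract of `G (F X)`. -/
structure Ambi (F : C ⥤ D) (G : D ⥤ C) where
  adj₁ : G ⊣ F
  adj₂ : F ⊣ G
  faithful : G.Faithful
  ret : ∀ X : C, Retract X (G.obj (F.obj X))

variable {F : C ⥤ D} {G : D ⥤ C}

lemma Ambi.F_projDim (H : Ambi F G) [EnoughProjectives C] (n : ℕ) (X : C)
    (h : HasProjectiveDimensionLT X (n + 1)) : HasProjectiveDimensionLT (F.obj X) (n + 1) := by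
  have := H.adj₁.isLeftAdjoint
  have := H.adj₂.isLeftAdjoint
  have := H.adj₁.isRightAdjoint
  have := H.adj₂.isRightAdjoint
  have : F.Additive := Functor.additive_of_preserves_binary_products F
  exact map_projDim F (fun P hP => H.adj₂.map_projective P hP) n X h

lemma Ambi.G_projDim (H : Ambi F G) [EnoughProjectives D] (n : ℕ) (X : D)
    (h : HasProjectiveDimensionLT X (n + 1)) : HasProjectiveDimensionLT (G.obj X) (n + 1) := by
  have := H.adj₁.isLeftAdjoint
  have := H.adj₂.isLeftAdjoint
  have := H.adj₁.isRightAdjoint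
  have := H.adj₂.isRightAdjoint
  have : G.Additive := Functor.additive_of_preserves_binary_products G
  exact map_projDim G (fun P hP => H.adj₁.map_projective P hP) n X h

lemma Ambi.F_injDim (H : Ambi F G) [EnoughInjectives C] (n : ℕ) (X : C)
    (h : HasInjectiveDimensionLT X (n + 1)) : HasInjectiveDimensionLT (F.obj X) (n + 1) := by
  have := H.adj₁.isLeftAdjoint
  have := H.adj₂.isLeftAdjoint
  have := H.adj₁.isRightAdjoint
  have := H.adj₂.isRightAdjoint
  have : F.Additive := Functor.additive_of_preserves_binary_products F
  exact map_injDim F (fun P hP => H.adj₁.map_injective P hP) n X h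

lemma Ambi.G_injDim (H : Ambi F G) [EnoughInjectives D] (n : ℕ) (X : D)
    (h : HasInjectiveDimensionLT X (n + 1)) : HasInjectiveDimensionLT (G.obj X) (n + 1) := by
  have := H.adj₁.isLeftAdjoint
  have := H.adj₂.isLeftAdjoint
  have := H.adj₁.isRightAdjoint
  have := H.adj₂.isRightAdjoint
  have : G.Additive := Functor.additive_of_preserves_binary_products G
  exact map_injDim G (fun P hP => H.adj₂.map_injective P hP) n X h

lemma Ambi.spli_iff (H : Ambi F G) [EnoughProjectives C] [EnoughProjectives D] [EnoughInjectives C]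
    [EnoughInjectives D] (n : ℕ) :
    (∀ X : C, Injective X → HasProjectiveDimensionLT X (n + 1)) ↔
    (∀ X : D, Injective X → HasProjectiveDimensionLT X (n + 1)) := by
  constructor
  · intro h X hX
    have h1 := H.F_projDim n _ (h _ (injective_iff_hasInjectiveDimensionLT_one.2
      (H.G_injDim 0 X (injective_iff_hasInjectiveDimensionLT_one.1 hX))))
    have := H.faithful
    let r : Retract X (F.obj (G.obj X)) :=
      { i := H.adj₁.unit.app X
        r := Injective.factorThru (𝟙 X) (H.adj₁.unit.app X)
        retract := Injective.comp_factorThru _ _ }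
    exact r.hasProjectiveDimensionLT _
  · intro h X hX
    have h1 := H.G_projDim n _ (h _ (injective_iff_hasInjectiveDimensionLT_one.2
      (H.F_injDim 0 X (injective_iff_hasInjectiveDimensionLT_one.1 hX))))
    exact (H.ret X).hasProjectiveDimensionLT _

lemma Ambi.silp_iff (H : Ambi F G) [EnoughProjectives C] [EnoughProjectives D] [EnoughInjectives C]
    [EnoughInjectives D] (n : ℕ) :
    (∀ X : C, Projective X → HasInjectiveDimensionLT X (n + 1)) ↔
    (∀ X : D, Projective X → HasInjectiveDimensionLT X (n + 1)) := by
  constructor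
  · intro h X hX
    have h1 := H.F_injDim n _ (h _ (projective_iff_hasProjectiveDimensionLT_one.2
      (H.G_projDim 0 X (projective_iff_hasProjectiveDimensionLT_one.1 hX))))
    have := H.faithful
    let r : Retract X (F.obj (G.obj X)) :=
      { i := Projective.factorThru (𝟙 X) (H.adj₂.counit.app X)
        r := H.adj₂.counit.app X
        retract := Projective.factorThru_comp _ _ }
    exact r.hasInjectiveDimensionLT _
  · intro h X hX
    have h1 := H.G_injDim n _ (h _ (projective_iff_hasProjectiveDimensionLT_one.2
      (H.F_projDim 0 X (projective_iff_hasProjectiveDimensionLT_one.1 hX))))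
    exact (H.ret X).hasInjectiveDimensionLT _

end Cat
end SplitFrob
namespace SplitFrob
section Adj
open ModuleCat
variable {R A : Type u} [Ring R] [Ring A] (ι : R →+* A)

lemma tr_lin (τ : A →+ R) {n : ℕ} (x y : Fin n → A)
    (hx : ∀ a : A, ∑ i, x i * ι (τ (y i * a)) = a)
    (hy : ∀ a : A, ∑ i, ι (τ (a * x i)) * y i = a) {M : Type u} [AddCommGroup M] [Module A M]
    (φ : A → M) (hadd : ∀ a b, φ (a + b) = φ a + φ b)
    (hsm : ∀ (r : R) (a : A), φ (ι r * a) = ι r • φ a) (a : A) :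
    ∑ i, x i • φ (y i * a) = a • ∑ i, x i • φ (y i) := by
  have h1 : ∀ i, φ (y i * a) = ∑ j, ι (τ (y i * a * x j)) • φ (y j) := by
    intro i
    conv_lhs => rw [← hy (y i * a)]
    rw [show φ (∑ j, ι (τ (y i * a * x j)) * y j) = _ from map_sum (AddMonoidHom.mk' φ hadd) _ _]
    exact Finset.sum_congr rfl fun j _ => hsm _ _
  simp_rw [h1, Finset.smul_sum]
  rw [Finset.sum_comm]
  refine Finset.sum_congr rfl fun j _ => ?_
  simp_rw [smul_smul]
  rw [← Finset.sum_smul]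
  congr 1
  simp_rw [mul_assoc]
  exact hx (a * x j)

lemma tr_one (τ : A →+ R) {n : ℕ} (x y : Fin n → A)
    (hx : ∀ a : A, ∑ i, x i * ι (τ (y i * a)) = a) {M : Type u} [AddCommGroup M] [Module A M]
    (m : M) : ∑ i, x i • (ι (τ (y i)) • m) = m := by
  simp_rw [smul_smul]
  rw [← Finset.sum_smul]
  have := hx 1
  simp only [mul_one] at this
  rw [this, one_smul]

/-- evaluation of an element of the coinduced module -/
noncomputable def ev (N : ModuleCat.{u} R) (g : (coextendScalars.{u, u, u} ι).obj N) (a : A) : N :=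
  CoextendScalars.equiv ι N g a

lemma ev_ext {N : ModuleCat.{u} R} {g h : (coextendScalars.{u, u, u} ι).obj N}
    (H : ∀ a, ev ι N g a = ev ι N h a) : g = h :=
  CoextendScalars.ext (LinearMap.ext H)

lemma ev_add {N : ModuleCat.{u} R} (g : (coextendScalars.{u, u, u} ι).obj N) (a b : A) :
    ev ι N g (a + b) = ev ι N g a + ev ι N g b :=
  (CoextendScalars.equiv ι N g).map_add a b

lemma ev_smul {N : ModuleCat.{u} R} (g : (coextendScalars.{u, u, u} ι).obj N) (r : R) (a : A) :
    ev ι N g (ι r * a) = r • ev ι N g a :=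
  (CoextendScalars.equiv ι N g).map_smul r a

lemma ev_sum {N : ModuleCat.{u} R} (g : (coextendScalars.{u, u, u} ι).obj N) {n : ℕ}
    (a : Fin n → A) : ev ι N g (∑ i, a i) = ∑ i, ev ι N g (a i) :=
  map_sum (AddMonoidHom.mk' (ev ι N g) (ev_add ι g)) a _

lemma add_ev {N : ModuleCat.{u} R} (g h : (coextendScalars.{u, u, u} ι).obj N) (a : A) :
    ev ι N (g + h) a = ev ι N g a + ev ι N h a := rfl

lemma sum_ev {N : ModuleCat.{u} R} {n : ℕ} (g : Fin n → (coextendScalars.{u, u, u} ι).obj N)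
    (a : A) : ev ι N (∑ i, g i) a = ∑ i, ev ι N (g i) a :=
  map_sum (AddMonoidHom.mk' (fun g => ev ι N g a) (fun g h => add_ev ι g h a)) g _

lemma smul_ev {N : ModuleCat.{u} R} (g : (coextendScalars.{u, u, u} ι).obj N) (s a : A) :
    ev ι N (s • g) a = ev ι N g (a * s) := rfl

lemma map_ev {M N : ModuleCat.{u} R} (f : M ⟶ N) (g : (coextendScalars.{u, u, u} ι).obj M)
    (a : A) : ev ι N ((coextendScalars ι).map f g) a = f (ev ι M g a) := rfl

/-- constructor for elements of the coinduced module -/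
noncomputable def mkCo (N : ModuleCat.{u} R) (h : A → N) (hadd : ∀ a b, h (a + b) = h a + h b)
    (hsmul : ∀ (r : R) a, h (ι r * a) = r • h a) : (coextendScalars.{u, u, u} ι).obj N :=
  (CoextendScalars.equiv ι N).symm
    { toFun := h
      map_add' := hadd
      map_smul' := hsmul }

lemma mkCo_ev (N : ModuleCat.{u} R) (h : A → N) (hadd) (hsmul) (a : A) :
    ev ι N (mkCo ι N h hadd hsmul) a = h a := rfl

/-- the map `N → Coind N` given by a bimodule map `τ : A → R`. -/
noncomputable def bim (τ : A →+ R) (hl : ∀ (r : R) (a : A), τ (ι r * a) = r * τ a)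
    (hr : ∀ (a : A) (r : R), τ (a * ι r) = τ a * r) (N : ModuleCat.{u} R) :
    N ⟶ (restrictScalars ι).obj ((coextendScalars.{u, u, u} ι).obj N) :=
  ofHom (Y := (restrictScalars ι).obj ((coextendScalars.{u, u, u} ι).obj N))
    { toFun := fun m => mkCo ι N (fun a => τ a • m)
        (fun a b => by rw [map_add, add_smul]) (fun r a => by rw [hl, mul_smul])
      map_add' := fun m m' => ev_ext ι (N := N) fun a => smul_add (τ a) m m'
      map_smul' := fun r m => ev_ext ι (N := N) fun a => by
        change τ a • (r • m) = τ (a * ι r) • m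
        rw [hr, mul_smul] }

lemma bim_ev (τ : A →+ R) (hl) (hr) (N : ModuleCat.{u} R) (m : N) (a : A) :
    ev ι N (bim ι τ hl hr N m) a = τ a • m := rfl

/-- the trace map `Coind (Res M) → M`. -/
noncomputable def tr (τ : A →+ R) {n : ℕ} (x y : Fin n → A)
    (hx : ∀ a : A, ∑ i, x i * ι (τ (y i * a)) = a)
    (hy : ∀ a : A, ∑ i, ι (τ (a * x i)) * y i = a) (M : ModuleCat.{u} A) :
    (coextendScalars.{u, u, u} ι).obj ((restrictScalars ι).obj M) ⟶ M :=
  ofHom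
    { toFun := fun g => ∑ i, x i • (show M from ev ι _ g (y i))
      map_add' := fun g h => by
        rw [← Finset.sum_add_distrib]
        exact Finset.sum_congr rfl fun i _ => smul_add (x i) _ _
      map_smul' := fun a g => by
        change ∑ i, x i • (show M from ev ι _ g (y i * a)) =
          a • ∑ i, x i • (show M from ev ι _ g (y i))
        exact tr_lin ι τ x y hx hy (M := M) (fun b => ev ι _ g b) (ev_add ι g) (ev_smul ι g) a }

lemma tr_apply (τ : A →+ R) {n : ℕ} (x y : Fin n → A) (hx) (hy) (M : ModuleCat.{u} A)
    (g : (coextendScalars.{u, u, u} ι).obj ((restrictScalars ι).obj M)) :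
    tr ι τ x y hx hy M g = ∑ i, x i • (show M from ev ι _ g (y i)) := rfl

/-- Coinduction is left adjoint to restriction for a Frobenius extension. -/
noncomputable def frobAdj (τ : A →+ R) (hl : ∀ (r : R) (a : A), τ (ι r * a) = r * τ a)
    (hr : ∀ (a : A) (r : R), τ (a * ι r) = τ a * r) {n : ℕ} (x y : Fin n → A)
    (hx : ∀ a : A, ∑ i, x i * ι (τ (y i * a)) = a)
    (hy : ∀ a : A, ∑ i, ι (τ (a * x i)) * y i = a) :
    coextendScalars.{u, u, u} ι ⊣ restrictScalars.{u} ι :=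
  Adjunction.mkOfUnitCounit
    { unit :=
        { app := fun N => bim ι τ hl hr N
          naturality := fun M N f => by
            ext m
            refine ev_ext ι (N := N) fun a => ?_
            change τ a • (f m) = f (τ a • m)
            rw [map_smul] }
      counit :=
        { app := fun M => tr ι τ x y hx hy M
          naturality := fun M N f => by
            ext g
            change ∑ i, x i • (show N from f (show M from ev ι _ g (y i))) =
              f (∑ i, x i • (show M from ev ι _ g (y i)))
            rw [map_sum]
            exact Finset.sum_congr rfl fun i _ => (f.hom.map_smul _ _).symm }
      left_triangle := by
        ext N g
        refine ev_ext ι (N := N) fun b => ?_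
        let h : Fin n → (coextendScalars.{u, u, u} ι).obj N := fun i => bim ι τ hl hr N (ev ι N g (y i))
        change ev ι N (∑ i, x i • h i) b = ev ι N g b
        rw [sum_ev]
        conv_rhs => rw [← hy b, ev_sum]
        exact Finset.sum_congr rfl fun i _ => (ev_smul ι g _ _).symm
      right_triangle := by
        ext M m
        change ∑ i, x i • (ι (τ (y i)) • (show M from m)) = (show M from m)
        exact tr_one ι τ x y hx (M := M) m }

lemma exists_ambi (hF : IsFrobeniusExtension ι) (hS : IsSplitExtension ι) :
    Nonempty (Ambi (coextendScalars.{u, u, u} ι) (restrictScalars.{u} ι)) := by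
  obtain ⟨-, τ, n, x, y, hl, hr, hx, hy⟩ := hF
  obtain ⟨π, pl, pr, p1⟩ := hS
  exact ⟨{
    adj₁ := restrictCoextendScalarsAdj.{u, u, u} ι
    adj₂ := frobAdj ι τ hl hr x y hx hy
    faithful := inferInstance
    ret := fun N =>
      { i := bim ι π pl pr N
        r := (restrictCoextendScalarsAdj.{u, u, u} ι).counit.app N
        retract := by
          ext m
          change π 1 • m = m
          have := p1 1
          rw [map_one] at this
          rw [this, one_smul] } }⟩

end Adj

section Dim
variable (Λ : Type u) [Ring Λ]

lemma pdimLE_iff (n : ℕ) (M : ModuleCat.{u} Λ) :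
    pdimLE Λ n M ↔ HasProjectiveDimensionLT M (n + 1) := by
  induction n generalizing M with
  | zero =>
    exact (IsProjective.iff_projective (R := Λ) M).trans projective_iff_hasProjectiveDimensionLT_one
  | succ n ih =>
    constructor
    · rintro ⟨G, f, hf, hG, hk⟩
      have hS := LinearMap.shortExact_shortComplexKer hf
      exact (hS.hasProjectiveDimensionLT_X₃_iff n
        ((IsProjective.iff_projective (R := Λ) G).1 hG)).2 ((ih _).1 hk)
    · intro h
      obtain ⟨p⟩ := EnoughProjectives.presentation M
      have hf : Function.Surjective p.f.hom := (ModuleCat.epi_iff_surjective p.f).1 p.epi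
      have hS := LinearMap.shortExact_shortComplexKer hf
      exact ⟨p.p, p.f.hom, hf, (IsProjective.iff_projective (R := Λ) p.p).2 p.projective,
        (ih _).2 ((hS.hasProjectiveDimensionLT_X₃_iff n p.projective).1 h)⟩

lemma coker_shortExact {M G : ModuleCat.{u} Λ} (f : M →ₗ[Λ] G) (hf : Function.Injective f) :
    (ModuleCat.shortComplexOfCompEqZero f (LinearMap.range f).mkQ
      f.exact_map_mkQ_range.linearMap_comp_eq_zero).ShortExact :=
  ModuleCat.shortComplex_shortExact _ f.exact_map_mkQ_range hf (Submodule.mkQ_surjective _)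

lemma idimLE_iff (n : ℕ) (M : ModuleCat.{u} Λ) :
    idimLE Λ n M ↔ HasInjectiveDimensionLT M (n + 1) := by
  induction n generalizing M with
  | zero =>
    exact (Module.injective_iff_injective_object Λ M).trans
      injective_iff_hasInjectiveDimensionLT_one
  | succ n ih =>
    constructor
    · rintro ⟨G, f, hf, hG, hk⟩
      have hS := coker_shortExact Λ f hf
      exact (hS.hasInjectiveDimensionLT_X₃_iff n
        ((Module.injective_iff_injective_object Λ G).1 hG)).1 ((ih _).1 hk)
    · intro h
      obtain ⟨p⟩ := EnoughInjectives.presentation M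
      have hf : Function.Injective p.f.hom := (ModuleCat.mono_iff_injective p.f).1 p.mono
      have hS := coker_shortExact Λ p.f.hom hf
      exact ⟨p.J, p.f.hom, hf, (Module.injective_iff_injective_object Λ p.J).2 p.injective,
        (ih _).2 ((hS.hasInjectiveDimensionLT_X₃_iff n p.injective).2 h)⟩

lemma sInf_le_nat (P : ℕ → Prop) (hP : ∀ m n, m ≤ n → P m → P n) (n : ℕ) :
    sInf {k : ℕ∞ | ∃ n : ℕ, k = (n : ℕ∞) ∧ P n} ≤ n ↔ P n := by
  constructor
  · intro h
    have hlt : sInf {k : ℕ∞ | ∃ n : ℕ, k = (n : ℕ∞) ∧ P n} < ((n + 1 : ℕ) : ℕ∞) :=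
      lt_of_le_of_lt h (by exact_mod_cast Nat.lt_succ_self n)
    obtain ⟨k, ⟨m, rfl, hm⟩, hk⟩ := sInf_lt_iff.1 hlt
    exact hP m n (by have : m < n + 1 := by exact_mod_cast hk
                     omega) hm
  · intro h
    exact sInf_le ⟨n, rfl, h⟩

lemma pdim_le_iff (n : ℕ) (M : ModuleCat.{u} Λ) :
    pdim Λ M ≤ n ↔ HasProjectiveDimensionLT M (n + 1) := by
  rw [← pdimLE_iff]
  refine sInf_le_nat (fun n => pdimLE Λ n M) (fun a b hab h => ?_) n
  rw [pdimLE_iff] at h ⊢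
  exact hasProjectiveDimensionLT_of_ge M (a + 1) (b + 1) (by omega)

lemma idim_le_iff (n : ℕ) (M : ModuleCat.{u} Λ) :
    idim Λ M ≤ n ↔ HasInjectiveDimensionLT M (n + 1) := by
  rw [← idimLE_iff]
  refine sInf_le_nat (fun n => idimLE Λ n M) (fun a b hab h => ?_) n
  rw [idimLE_iff] at h ⊢
  exact hasInjectiveDimensionLT_of_ge M (a + 1) (b + 1) (by omega)

lemma spli_le_iff (n : ℕ) : spli Λ ≤ n ↔
    ∀ M : ModuleCat.{u} Λ, Injective M → HasProjectiveDimensionLT M (n + 1) := by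
  simp only [spli, iSup_le_iff, pdim_le_iff]
  exact forall_congr' fun M => imp_congr (Module.injective_iff_injective_object Λ M) Iff.rfl

lemma silp_le_iff (n : ℕ) : silp Λ ≤ n ↔
    ∀ M : ModuleCat.{u} Λ, Projective M → HasInjectiveDimensionLT M (n + 1) := by
  simp only [silp, iSup_le_iff, idim_le_iff]
  exact forall_congr' fun M => imp_congr (IsProjective.iff_projective (R := Λ) M) Iff.rfl

lemma enat_le {a b : ℕ∞} (h : ∀ n : ℕ, b ≤ n → a ≤ n) : a ≤ b := by
  induction b with
  | top => exact le_top
  | coe n => exact h n le_rfl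

lemma ne_top_iff {a : ℕ∞} : a ≠ ⊤ ↔ ∃ n : ℕ, a ≤ n := by
  constructor
  · intro h
    obtain ⟨n, rfl⟩ := ENat.ne_top_iff_exists.1 h
    exact ⟨n, le_rfl⟩
  · rintro ⟨n, h⟩ rfl
    exact ENat.natCast_ne_top n (top_le_iff.1 h)

lemma findim_le_silp : findim Λ ≤ silp Λ := by
  refine enat_le fun n hn => ?_
  rw [silp_le_iff] at hn
  simp only [findim, iSup_le_iff]
  intro M hM
  obtain ⟨m, hm⟩ := ne_top_iff.1 hM
  rw [pdim_le_iff] at hm ⊢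
  exact projDim_of_finite (n + 1) hn m M
    (hasProjectiveDimensionLT_of_ge M (m + 1) _ (by omega))

lemma spli_le_findim (h : spli Λ ≠ ⊤) : spli Λ ≤ findim Λ := by
  refine iSup₂_le fun M hM => ?_
  have h1 : pdim Λ M ≤ spli Λ := le_iSup₂ (f := fun (M : ModuleCat.{u} Λ)
    (_ : Module.Injective Λ M) => pdim Λ M) M hM
  exact le_iSup₂ (f := fun (M : ModuleCat.{u} Λ) (_ : pdim Λ M ≠ ⊤) => pdim Λ M) M
    (ne_top_of_le_ne_top h h1)

lemma silp_le_spli (h : silp Λ ≠ ⊤) : silp Λ ≤ spli Λ := by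
  obtain ⟨m, hm⟩ := ne_top_iff.1 h
  refine enat_le fun n hn => ?_
  rw [spli_le_iff] at hn
  rw [silp_le_iff] at hm ⊢
  intro M hM
  have := hm M hM
  exact injDim_of_finite (n + 1) hn m M
    (hasInjectiveDimensionLT_of_ge M (m + 1) _ (by omega))

lemma goren (h : IsGorensteinRegular Λ) : spli Λ = silp Λ ∧ silp Λ = findim Λ := by
  have h1 := findim_le_silp Λ
  have h2 := spli_le_findim Λ h.1
  have h3 := silp_le_spli Λ h.2
  exact ⟨le_antisymm (h2.trans h1) h3, le_antisymm (h3.trans h2) h1⟩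

end Dim
end SplitFrob

section Statement

variable {R A : Type u} [Ring R] [Ring A]

theorem stmt11 (ι : R →+* A) (hF : IsFrobeniusExtension ι) (hS : IsSplitExtension ι)
    (hreg : IsGorensteinRegular A ∨ IsGorensteinRegular R) :
    spli A = silp A ∧ silp A = findim A ∧ findim A = spli R ∧
      spli R = silp R ∧ silp R = findim R := by
  obtain ⟨H⟩ := SplitFrob.exists_ambi ι hF hS
  have e1 : ∀ n : ℕ, spli R ≤ n ↔ spli A ≤ n := fun n => by
    rw [SplitFrob.spli_le_iff, SplitFrob.spli_le_iff]
    exact H.spli_iff n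
  have e2 : ∀ n : ℕ, silp R ≤ n ↔ silp A ≤ n := fun n => by
    rw [SplitFrob.silp_le_iff, SplitFrob.silp_le_iff]
    exact H.silp_iff n
  have s1 : spli R = spli A := le_antisymm (SplitFrob.enat_le fun n => (e1 n).2)
    (SplitFrob.enat_le fun n => (e1 n).1)
  have s2 : silp R = silp A := le_antisymm (SplitFrob.enat_le fun n => (e2 n).2)
    (SplitFrob.enat_le fun n => (e2 n).1)
  have hA : IsGorensteinRegular A := by
    rcases hreg with h | h
    · exact h
    · exact ⟨s1 ▸ h.1, s2 ▸ h.2⟩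
  have hR : IsGorensteinRegular R := ⟨s1 ▸ hA.1, s2 ▸ hA.2⟩
  obtain ⟨a1, a2⟩ := SplitFrob.goren A hA
  obtain ⟨r1, r2⟩ := SplitFrob.goren R hR
  exact ⟨a1, a2, by rw [← a2, ← a1, s1], r1, r2⟩

end Statement
end
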